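/- For every g ≥ 1, the kernel of the ℂ-linear endomorphism of ℂ[α,β,γ]/J_g given by multiplication by β² − 64 has dimension g(g+1)/2 + δ, where δ = 1 if g ≡ 2 (mod 4) and δ = 0 otherwise. (Equivalently, the invariant part of the framed instanton homology I^#_inv(Σ_g × S¹)_w has dimension g(g+1) + 2δ.) -/

import Mathlib

open MvPolynomial

/-- ζ_k ∈ ℂ[α,β,γ] (variables: X 0 = α, X 1 = β, X 2 = γ). -/
noncomputable def zeta : ℕ → MvPolynomial (Fin 3) ℂ
  | 0 => 1
  | 1 => X 0
  | 2 => X 0 * zeta 1 + (X 1 - C 8) * zeta 0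
  | (n + 3) =>
      X 0 * zeta (n + 2)
        + C (((n : ℂ) + 2) ^ 2) * (X 1 + C ((-1) ^ (n + 2) * 8)) * zeta (n + 1)
        + C (2 * ((n : ℂ) + 2) * ((n : ℂ) + 1)) * X 2 * zeta n

/-- J_g = (ζ_g, ζ_{g+1}, ζ_{g+2}) ⊆ ℂ[α,β,γ]. -/
noncomputable def J (g : ℕ) : Ideal (MvPolynomial (Fin 3) ℂ) :=
  Ideal.span {zeta g, zeta (g + 1), zeta (g + 2)}


/-- generic sequence -/
noncomputable def zz {T : Type*} [CommRing T] (w : ℕ → T) (a t : T) : ℕ → T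
  | 0 => 1
  | 1 => a
  | 2 => a * zz w a t 1 + w 1 * zz w a t 0
  | (n + 3) => a * zz w a t (n + 2) + w (n + 2) * zz w a t (n + 1)
      + 2 * ((n : T) + 2) * ((n : T) + 1) * t * zz w a t n

theorem zz_zero {T : Type*} [CommRing T] (w : ℕ → T) (a t : T) : zz w a t 0 = 1 := by rw [zz]
theorem zz_one {T : Type*} [CommRing T] (w : ℕ → T) (a t : T) : zz w a t 1 = a := by rw [zz]

theorem zz_succ {T : Type*} [CommRing T] (w : ℕ → T) (a t : T) (hw : w 0 = 0) (n : ℕ) :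
    zz w a t (n + 1) = a * zz w a t n + w n * zz w a t (n - 1)
      + 2 * (n : T) * ((n : T) - 1) * t * zz w a t (n - 2) := by
  match n with
  | 0 => simp [zz, hw]
  | 1 => simp [zz]
  | n + 2 =>
    rw [zz]
    simp only [Nat.add_sub_cancel, show n + 2 - 1 = n + 1 by omega]
    push_cast
    ring

theorem map_zz {T T' : Type*} [CommRing T] [CommRing T'] (f : T →+* T') (w : ℕ → T) (a t : T)
    (hw : w 0 = 0) (n : ℕ) :
    f (zz w a t n) = zz (fun k => f (w k)) (f a) (f t) n := by
  induction n using Nat.strong_induction_on with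
  | _ n ih =>
    match n with
    | 0 => simp [zz_zero]
    | n + 1 =>
      rw [zz_succ _ _ _ hw, zz_succ _ _ _ (by simp [hw])]
      simp only [map_add, map_mul, map_sub, map_natCast, map_one, map_ofNat]
      rw [ih n (by omega), ih (n - 1) (by omega), ih (n - 2) (by omega)]

/-- generic ideal -/
noncomputable def JJ {T : Type*} [CommRing T] (w : ℕ → T) (a t : T) (g : ℕ) : Ideal T :=
  Ideal.span {zz w a t g, zz w a t (g + 1), zz w a t (g + 2)}

section gen
variable {T : Type*} [CommRing T] {w : ℕ → T} {a t : T}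

theorem JJ_le {g : ℕ} {I : Ideal T} (h0 : zz w a t g ∈ I) (h1 : zz w a t (g + 1) ∈ I)
    (h2 : zz w a t (g + 2) ∈ I) : JJ w a t g ≤ I := by
  rw [JJ, Ideal.span_le]
  rintro x (rfl | rfl | rfl) <;> assumption

theorem zz_mem (hw : w 0 = 0) {g k : ℕ} (h : g ≤ k) : zz w a t k ∈ JJ w a t g := by
  induction k using Nat.strong_induction_on with
  | _ k ih =>
    by_cases h3 : g + 3 ≤ k
    · obtain ⟨n, rfl⟩ : ∃ n, k = n + 1 := ⟨k - 1, by omega⟩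
      rw [zz_succ _ _ _ hw]
      refine Ideal.add_mem _ (Ideal.add_mem _ ?_ ?_) ?_ <;> apply Ideal.mul_mem_left <;>
        apply ih <;> omega
    · have : k = g ∨ k = g + 1 ∨ k = g + 2 := by omega
      apply Ideal.subset_span
      rcases this with rfl | rfl | rfl <;> simp

theorem JJ_anti (hw : w 0 = 0) {g k : ℕ} (h : g ≤ k) : JJ w a t k ≤ JJ w a t g :=
  JJ_le (zz_mem hw h) (zz_mem hw (by omega)) (zz_mem hw (by omega))

theorem JJ_zero : JJ w a t 0 = ⊤ := by
  rw [Ideal.eq_top_iff_one, ← zz_zero w a t]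
  apply Ideal.subset_span; simp

variable [Algebra ℂ T]

theorem natmul_mem {I : Ideal T} {n : ℕ} (hn : n ≠ 0) {x : T} (h : (n : T) * x ∈ I) : x ∈ I := by
  have : algebraMap ℂ T ((n : ℂ)⁻¹) * ((n : T) * x) = x := by
    rw [← map_natCast (algebraMap ℂ T) n, ← mul_assoc, ← map_mul, inv_mul_cancel₀ (by exact_mod_cast hn)]
    simp
  rw [← this]
  exact Ideal.mul_mem_left _ _ h

/-- In any case `γ ζ_{g} ∈ J_{g+1}`. -/
theorem t_mul_mem (hw : w 0 = 0) {g : ℕ} {x : T} (h : x ∈ JJ w a t g) : t * x ∈ JJ w a t (g + 1) := by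
  suffices h' : JJ w a t g ≤ Submodule.comap (LinearMap.mulLeft T t) (JJ w a t (g + 1)) from h' h
  refine JJ_le ?_ ?_ ?_
  · show t * zz w a t g ∈ JJ w a t (g + 1)
    have := zz_succ w a t hw (g + 2)
    have h1 := zz_mem (a := a) (t := t) hw (show g + 1 ≤ g + 2 + 1 by omega)
    have h2 := zz_mem (a := a) (t := t) hw (show g + 1 ≤ g + 2 by omega)
    have h3 := zz_mem (a := a) (t := t) hw (show g + 1 ≤ g + 1 by omega)
    apply natmul_mem (n := 2 * (g + 2) * (g + 1)) (by positivity)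
    have e : ((2 * (g + 2) * (g + 1) : ℕ) : T) * (t * zz w a t g) = zz w a t (g + 2 + 1)
      - a * zz w a t (g + 2) - w (g + 2) * zz w a t (g + 1) := by
      rw [this]
      simp only [Nat.add_sub_cancel, show g + 2 - 1 = g + 1 by omega]
      push_cast
      ring
    rw [e]
    exact sub_mem (sub_mem h1 (Ideal.mul_mem_left _ _ h2)) (Ideal.mul_mem_left _ _ h3)
  · exact Ideal.mul_mem_left _ _ (zz_mem hw (by omega))
  · exact Ideal.mul_mem_left _ _ (zz_mem hw (by omega))

/-- `J_{g+2} = (ζ_{g+2}) + γ J_g` when `w_{g+2} = 0`. -/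
theorem good_mul (hw : w 0 = 0) {g : ℕ} (hg : w (g + 2) = 0) {x : T} (h : x ∈ JJ w a t g) :
    t * x ∈ JJ w a t (g + 2) := by
  suffices h' : JJ w a t g ≤ Submodule.comap (LinearMap.mulLeft T t) (JJ w a t (g + 2)) from h' h
  refine JJ_le ?_ ?_ ?_
  · show t * zz w a t g ∈ JJ w a t (g + 2)
    have := zz_succ w a t hw (g + 2)
    have h1 := zz_mem (a := a) (t := t) hw (show g + 2 ≤ g + 2 + 1 by omega)
    have h2 := zz_mem (a := a) (t := t) hw (show g + 2 ≤ g + 2 by omega)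
    apply natmul_mem (n := 2 * (g + 2) * (g + 1)) (by positivity)
    have e : ((2 * (g + 2) * (g + 1) : ℕ) : T) * (t * zz w a t g) = zz w a t (g + 2 + 1)
      - a * zz w a t (g + 2)  := by
      rw [this, hg]
      simp only [Nat.add_sub_cancel]
      push_cast
      ring
    rw [e]
    exact sub_mem h1 (Ideal.mul_mem_left _ _ h2)
  · show t * zz w a t (g + 1) ∈ JJ w a t (g + 2)
    exact t_mul_mem hw (zz_mem hw (by omega))
  · exact Ideal.mul_mem_left _ _ (zz_mem hw (by omega))

theorem good_eq (hw : w 0 = 0) {g : ℕ} (hg : w (g + 2) = 0) {x : T} (h : x ∈ JJ w a t (g + 2)) :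
    ∃ r, ∃ y ∈ JJ w a t g, x = r * zz w a t (g + 2) + t * y := by
  rw [JJ, Ideal.mem_span_insert] at h
  obtain ⟨r, z, hz, rfl⟩ := h
  rw [Ideal.mem_span_pair] at hz
  obtain ⟨p, q, rfl⟩ := hz
  have e1 := zz_succ w a t hw (g + 2)
  have e2 := zz_succ w a t hw (g + 3)
  simp only [Nat.add_sub_cancel, hg, show g + 3 - 1 = g + 2 by omega, show g + 3 - 2 = g + 1 by omega] at e1 e2
  refine ⟨r + p * a + q * (a * a + w (g + 3)), 
    p * (2 * ((g + 2 : ℕ) : T) * (((g + 2 : ℕ) : T) - 1)) * zz w a t g + 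
    q * a * (2 * ((g + 2 : ℕ) : T) * (((g + 2 : ℕ) : T) - 1)) * zz w a t g +
    q * (2 * ((g + 3 : ℕ) : T) * (((g + 3 : ℕ) : T) - 1)) * zz w a t (g + 1), ?_, ?_⟩
  · refine add_mem (add_mem ?_ ?_) ?_ <;> apply Ideal.mul_mem_left <;> apply zz_mem hw <;> omega
  · rw [show g + 2 + 2 = g + 3 + 1 by ring, e2, show g + 3 = g + 2 + 1 by ring, e1]
    ring

theorem JJ_one (hw : w 0 = 0) (h1 : w 1 = 0) {x : T} :
    x ∈ JJ w a t 1 ↔ ∃ r y, x = r * a + t * y := by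
  have e2 := zz_succ w a t hw 1
  have e3 := zz_succ w a t hw 2
  simp only [h1, zz_zero, zz_one, Nat.cast_one, Nat.sub_self, Nat.add_one_sub_one, show 1 - 2 = 0 by rfl] at e2 e3
  norm_num at e2 e3
  simp only [e2, zz_one] at e3
  constructor
  · intro h
    rw [JJ, Ideal.mem_span_insert] at h
    obtain ⟨r, z, hz, rfl⟩ := h
    rw [Ideal.mem_span_pair] at hz
    obtain ⟨p, q, rfl⟩ := hz
    refine ⟨r + p * a + q * (a * a + w 2), q * (2 * 2), ?_⟩
    simp only [zz_one, Nat.reduceAdd, e2, e3]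
    ring
  · rintro ⟨r, y, rfl⟩
    have ha : a ∈ JJ w a t 1 := by
      have := zz_mem (a := a) (t := t) hw (le_refl 1)
      rwa [zz_one] at this
    refine add_mem (Ideal.mul_mem_left _ _ ha) (Ideal.mul_mem_right _ _ ?_)
    have := t_mul_mem (x := 1) (g := 0) (a := a) (t := t) hw (by rw [JJ_zero]; trivial)
    simpa using this

theorem tpow_mem (hw : w 0 = 0) {d : ℕ} (hd : ∀ k, k % 2 = d → w k = 0) (i : ℕ) {g k : ℕ} (hg : g % 2 = d)
    (h : g ≤ k + 2 * i) : t ^ i * zz w a t k ∈ JJ w a t g := by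
  induction i generalizing g with
  | zero => simpa using zz_mem hw h
  | succ i ih =>
    match g with
    | 0 => rw [JJ_zero]; trivial
    | 1 =>
      rw [JJ_one hw (hd 1 hg)]
      exact ⟨0, t ^ i * zz w a t k, by ring⟩
    | g + 2 =>
      rw [pow_succ', mul_assoc]
      exact good_mul hw (hd _ hg) (ih (by omega) (by omega))

end gen


/-- The positivity argument. -/
theorem numeric (e N : ℕ) (he : e = 0 ∨ e = 1) (c x : ℂ) (f g : ℕ → ℂ) (hc : c ≠ 0)
    (hA : ∀ j ≤ N, x * g j + c * ((2 * j + e : ℕ) : ℂ) ^ 2 * f j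
      + 2 * ((2 * j + e : ℕ) : ℂ) * (((2 * j + e : ℕ) : ℂ) - 1) * g (j - 1) = 0)
    (hB : ∀ j ≤ N, g j = x * f j
      + 2 * (((2 * j + e : ℕ) : ℂ) - 1) * (((2 * j + e : ℕ) : ℂ) - 2) * f (j - 1))
    (h0 : e = 0 → f 0 = 0) (hN : g N = 0) : f N = 0 := by
  by_contra hne
  classical
  have hex : ∃ j, f j ≠ 0 := ⟨N, hne⟩
  set r := Nat.find hex with hr
  have hfr : f r ≠ 0 := Nat.find_spec hex
  have hlt : ∀ j < r, f j = 0 := fun j hj => by simpa using Nat.find_min hex hj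
  have hrN : r ≤ N := Nat.find_min' hex hne
  have hr0 : 2 * r + e ≠ 0 := by
    intro h
    have h1 : r = 0 := by omega
    have h2 : e = 0 := by omega
    rw [h1] at hfr
    exact hfr (h0 h2)
  set R : ℝ := ((2 * r + e : ℕ) : ℝ) with hR
  have hRpos : 0 < R := by rw [hR]; exact_mod_cast Nat.pos_of_ne_zero hr0
  have hRc : ((2 * r + e : ℕ) : ℂ) = (R : ℂ) := by rw [hR]; push_cast; rfl
  have hRne : (R : ℂ) ≠ 0 := by exact_mod_cast hRpos.ne'
  have hgr : g r = x * f r := by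
    have := hB r hrN
    rcases Nat.eq_zero_or_pos r with h | h
    · have : e = 1 := by omega
      subst this
      rw [this, h]; norm_num
    · rw [this, hlt (r - 1) (by omega)]; ring
  have hgr1 : 2 * (R : ℂ) * ((R : ℂ) - 1) * g (r - 1) = 0 := by
    rcases Nat.eq_zero_or_pos r with h | h
    · have : e = 1 := by omega
      subst this
      rw [← hRc, h]; norm_num
    · have := hB (r - 1) (by omega)
      rw [hlt (r - 1) (by omega)] at this
      rcases Nat.eq_zero_or_pos (r - 1) with h' | h'
      · have h1 : r = 1 := by omega
        rcases he with rfl | rfl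
        · rw [this, h', hlt (0 - 1) (by omega)]; ring
        · rw [this, h']; norm_num
      · rw [this, hlt (r - 1 - 1) (by omega)]; ring
  have hx2 : x ^ 2 = - c * (R : ℂ) ^ 2 := by
    have := hA r hrN
    rw [hRc, hgr1, hgr] at this
    have h' : (x ^ 2 + c * (R : ℂ) ^ 2) * f r = 0 := by linear_combination this
    rcases mul_eq_zero.1 h' with h | h
    · linear_combination h
    · exact absurd h hfr
  have hx : x ≠ 0 := by
    rintro rfl
    have : c * (R : ℂ) ^ 2 = 0 := by linear_combination hx2
    simp [hc, hRne] at this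
  obtain ⟨s, hs⟩ : ∃ s : ℂ, x = 4 * s * R := ⟨x / (4 * R), by field_simp⟩
  have hs0 : s ≠ 0 := by rintro rfl; simp at hs; exact hx hs
  have hcs : c = - 16 * s ^ 2 := by
    have : (c + 16 * s ^ 2) * (R : ℂ) ^ 2 = 0 := by
      rw [hs] at hx2; linear_combination hx2
    rcases mul_eq_zero.1 this with h | h
    · linear_combination h
    · simp [hRne] at h
  have key : ∀ i, r + i ≤ N → ∃ X Y : ℝ, 0 < X ∧ 0 < Y ∧ s ^ i * f (r + i) = X * f r ∧
      s ^ i * g (r + i) = s * Y * f r := by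
    intro i
    induction i with
    | zero =>
      intro _
      refine ⟨1, 4 * R, one_pos, by positivity, by simp, ?_⟩
      simp only [add_zero, pow_zero, one_mul, hgr, hs]
      push_cast; ring
    | succ i ih =>
      intro hi
      obtain ⟨X, Y, hX, hY, h1, h2⟩ := ih (by omega)
      have hA' := hA (r + (i + 1)) hi
      have hB' := hB (r + (i + 1)) hi
      rw [show r + (i + 1) - 1 = r + i by omega] at hA' hB'
      set k : ℝ := ((2 * (r + (i + 1)) + e : ℕ) : ℝ) with hk
      have hkc : ((2 * (r + (i + 1)) + e : ℕ) : ℂ) = (k : ℂ) := by rw [hk]; push_cast; rfl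
      rw [hkc] at hA' hB'
      have hkR : k = R + 2 * (i + 1) := by rw [hk, hR]; push_cast; ring
      have hi0 : (0 : ℝ) ≤ i := by positivity
      have hR1 : 1 ≤ R := by rw [hR]; exact_mod_cast Nat.one_le_iff_ne_zero.2 hr0
      have hk2 : 0 < k - 2 := by linarith
      have hk1 : 0 < k - 1 := by linarith
      have hk0 : 0 < k := by linarith
      have hD : 0 < k ^ 2 - R ^ 2 := by nlinarith
      refine ⟨(k - 1) * (4 * R * (k - 2) * X + k * Y) / (8 * (k ^ 2 - R ^ 2)),
        4 * R * ((k - 1) * (4 * R * (k - 2) * X + k * Y) / (8 * (k ^ 2 - R ^ 2)))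
          + 2 * (k - 1) * (k - 2) * X, by positivity, by positivity, ?_⟩
      have hDc : ((k : ℂ) ^ 2 - (R : ℂ) ^ 2) ≠ 0 := by exact_mod_cast hD.ne'
      have E1 : s ^ (i + 1) * f (r + (i + 1)) =
        (k - 1) * (4 * R * (k - 2) * X + k * Y) / (8 * (k ^ 2 - R ^ 2)) * f r := by
        rw [div_mul_eq_mul_div, eq_div_iff (by simpa using hDc)]
        rw [hB', hs, hcs] at hA'
        have : s * (s ^ (i + 1) * f (r + (i + 1)) * (8 * ((k : ℂ) ^ 2 - R ^ 2))) =
          s * ((k - 1) * (4 * R * (k - 2) * X + k * Y) * f r) := by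
          have h3 : s ^ i * (-16 * s ^ 2 * ((k : ℂ) ^ 2 - R ^ 2) * f (r + (i + 1)) 
            + 2 * (k - 1) * (4 * s * R * (k - 2) * f (r + i) + k * g (r + i))) = 0 := by
            linear_combination s ^ i * hA'
          linear_combination (-1 / 2) * h3 + (k - 1) * (4 * s * R * (k - 2)) * h1 
            + (k - 1) * k * h2
        exact mul_left_cancel₀ hs0 this
      constructor
      · rw [E1]; push_cast; ring
      · rw [hB', hs]
        push_cast
        linear_combination 4 * s * R * E1 + 2 * (k - 1) * (k - 2) * s * h1
  obtain ⟨X, Y, hX, hY, -, h2⟩ := key (N - r) (by omega)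
  rw [show r + (N - r) = N by omega, hN, mul_zero] at h2
  have hYc : (Y : ℂ) ≠ 0 := by exact_mod_cast hY.ne'
  exact mul_ne_zero (mul_ne_zero hs0 hYc) hfr h2.symm

/-- Existence of eigen-functionals. -/
theorem eig {S : Type*} [CommRing S] [Algebra ℂ S] (I K : Ideal S) [Module.Finite ℂ (S ⧸ I)]
    (a : S) (h : ¬ K ≤ I) : ∃ (l : S →ₗ[ℂ] ℂ) (x : ℂ), (∀ s ∈ I, l s = 0) ∧
      (∀ s ∈ K, l (a * s) = x * l s) ∧ ∃ s ∈ K, l s ≠ 0 := by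
  let m : S →ₗ[ℂ] S ⧸ I := (Ideal.Quotient.mkₐ ℂ I).toLinearMap
  have hm : ∀ s, m s = Ideal.Quotient.mk I s := fun s => rfl
  let W : Submodule ℂ (S ⧸ I) := (K.restrictScalars ℂ).map m
  have hmW : ∀ s ∈ K, m s ∈ W := fun s hs => Submodule.mem_map_of_mem (by simpa using hs)
  let A0 : (S ⧸ I) →ₗ[ℂ] (S ⧸ I) := LinearMap.mulLeft ℂ (Ideal.Quotient.mk I a)
  have hA : ∀ v ∈ W, A0 v ∈ W := by
    rintro v ⟨s, hs, rfl⟩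
    have : A0 (m s) = m (a * s) := by simp [A0, hm]
    rw [this]
    exact hmW _ (K.mul_mem_left _ (by simpa using hs))
  let A : W →ₗ[ℂ] W := A0.restrict hA
  have : Nontrivial W := by
    rw [SetLike.not_le_iff_exists] at h
    obtain ⟨s, hs, hsI⟩ := h
    refine ⟨⟨m s, hmW s hs⟩, 0, ?_⟩
    intro h0
    have : m s = 0 := congrArg Subtype.val h0
    rw [hm, Ideal.Quotient.eq_zero_iff_mem] at this
    exact hsI this
  obtain ⟨x, hx⟩ := Module.End.exists_eigenvalue (K := ℂ) (V := Module.Dual ℂ W) A.dualMap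
  obtain ⟨u, hu⟩ := hx.exists_hasEigenvector
  have hu1 := hu.apply_eq_smul
  have hu2 := hu.2
  obtain ⟨L, hL⟩ := LinearMap.exists_extend u
  have hLW : ∀ v : W, L v = u v := fun v => by rw [← hL]; rfl
  refine ⟨L ∘ₗ m, x, ?_, ?_, ?_⟩
  · intro s hs
    have : m s = 0 := by rw [hm, Ideal.Quotient.eq_zero_iff_mem]; exact hs
    simp [this]
  · intro s hs
    have h1 : L (m (a * s)) = u (A ⟨m s, hmW s hs⟩) := by
      rw [← hLW]; congr 1
    have h2 : L (m s) = u ⟨m s, hmW s hs⟩ := hLW ⟨m s, hmW s hs⟩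
    have h3 := LinearMap.congr_fun hu1 ⟨m s, hmW s hs⟩
    simp only [LinearMap.comp_apply, h1, h2]
    simpa using h3
  · by_contra! hcon
    apply hu2
    ext ⟨v, hv⟩
    obtain ⟨s, hs, rfl⟩ := hv
    rw [← hLW]
    exact hcon s (by simpa using hs)


/-- the specialised coefficients -/
noncomputable def ww (e : ℕ) (c : ℂ) (k : ℕ) : ℂ := if k % 2 = e then c * (k : ℂ) ^ 2 else 0

/-- ℂ[α][γ] -/
abbrev SS := Polynomial (Polynomial ℂ)

/-- specialised coefficients in an algebra -/
noncomputable def wa (T : Type*) [CommRing T] [Algebra ℂ T] (e : ℕ) (c : ℂ) (k : ℕ) : T :=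
  algebraMap ℂ T (ww e c k)

/-- specialised ζ -/
noncomputable def Z (e : ℕ) (c : ℂ) (k : ℕ) : SS :=
  zz (wa SS e c) (Polynomial.C Polynomial.X) Polynomial.X k

/-- specialised J -/
noncomputable def JS (e : ℕ) (c : ℂ) (g : ℕ) : Ideal SS :=
  JJ (wa SS e c) (Polynomial.C Polynomial.X) Polynomial.X g

theorem wa_zero (T : Type*) [CommRing T] [Algebra ℂ T] (e : ℕ) (c : ℂ) : wa T e c 0 = 0 := by
  simp [wa, ww]

theorem wa_good (T : Type*) [CommRing T] [Algebra ℂ T] (e : ℕ) (c : ℂ) (k : ℕ) (h : k % 2 ≠ e) :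
    wa T e c k = 0 := by
  simp [wa, ww, h]

theorem Z_pow_mem (e : ℕ) (he : e = 0 ∨ e = 1) (c : ℂ) (i g k : ℕ) (hg : g % 2 ≠ e)
    (h : g ≤ k + 2 * i) : Polynomial.X ^ i * Z e c k ∈ JS e c g := by
  refine tpow_mem (wa_zero _ _ _) (d := 1 - e) ?_ i ?_ h
  · intro k hk; apply wa_good; omega
  · omega

theorem Z_A (e : ℕ) (c : ℂ) (i k : ℕ) (hk : k % 2 = e) :
    (Polynomial.X ^ i * Z e c (k + 1) : SS) = Polynomial.C Polynomial.X * (Polynomial.X ^ i * Z e c k)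
      + (c * (k : ℂ) ^ 2) • (Polynomial.X ^ i * Z e c (k - 1))
      + (2 * (k : ℂ) * ((k : ℂ) - 1)) • (Polynomial.X ^ (i + 1) * Z e c (k - 2)) := by
  have := zz_succ (wa SS e c) (Polynomial.C Polynomial.X) Polynomial.X (wa_zero _ _ _) k
  rw [Z, this, Algebra.smul_def, Algebra.smul_def]
  have h : wa SS e c k = algebraMap ℂ SS (c * (k : ℂ) ^ 2) := by simp only [wa, ww, hk, if_true]
  rw [h]
  simp only [map_mul, map_pow, map_sub, map_natCast, map_one, map_ofNat, Z]
  ring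

theorem Z_B (e : ℕ) (c : ℂ) (i k : ℕ) (hk : k % 2 ≠ e) :
    (Polynomial.X ^ i * Z e c (k + 1) : SS) = Polynomial.C Polynomial.X * (Polynomial.X ^ i * Z e c k)
      + (2 * (k : ℂ) * ((k : ℂ) - 1)) • (Polynomial.X ^ (i + 1) * Z e c (k - 2)) := by
  have := zz_succ (wa SS e c) (Polynomial.C Polynomial.X) Polynomial.X (wa_zero _ _ _) k
  rw [Z, this, Algebra.smul_def, wa_good SS e c k hk]
  simp only [map_mul, map_sub, map_natCast, map_one, map_ofNat, Z]
  ring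

theorem numeric0 (N : ℕ) (c : ℂ) (f g : ℕ → ℂ)
    (hA : ∀ j ≤ N, (0 : ℂ) * g j + c * ((2 * j + 0 : ℕ) : ℂ) ^ 2 * f j
      + 2 * ((2 * j + 0 : ℕ) : ℂ) * (((2 * j + 0 : ℕ) : ℂ) - 1) * g (j - 1) = 0)
    (hB : ∀ j ≤ N, 1 ≤ j → g j = 0 * f j
      + 2 * (((2 * j + 0 : ℕ) : ℂ) - 1) * (((2 * j + 0 : ℕ) : ℂ) - 2) * f (j - 1))
    (i : ℕ) (hi : 2 * i ≤ N) (h : g (2 * i) = 0) : g 0 = 0 := by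
  induction i with
  | zero => simpa using h
  | succ i ih =>
    apply ih (by omega)
    have b := hB (2 * (i + 1)) hi (by omega)
    have a' := hA (2 * i + 1) (by omega)
    rw [h, show 2 * (i + 1) - 1 = 2 * i + 1 by omega] at b
    rw [show 2 * i + 1 - 1 = 2 * i by omega] at a'
    have e1 : 2 * (((4 * i + 3 : ℕ) : ℂ)) * ((4 * i + 2 : ℕ) : ℂ) * f (2 * i + 1) = 0 := by
      push_cast at b ⊢; linear_combination -b
    have f0 : f (2 * i + 1) = 0 := by
      rcases mul_eq_zero.1 e1 with h | h
      · exfalso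
        have : (2 * (4 * i + 3) * (4 * i + 2) : ℕ) = 0 := by exact_mod_cast h
        simp at this
      · exact h
    have e2 : 2 * (((4 * i + 2 : ℕ) : ℂ)) * ((4 * i + 1 : ℕ) : ℂ) * g (2 * i) = 0 := by
      rw [f0] at a'
      push_cast at a' ⊢; linear_combination a'
    rcases mul_eq_zero.1 e2 with h | h
    · exfalso
      have : (2 * (4 * i + 2) * (4 * i + 1) : ℕ) = 0 := by exact_mod_cast h
      simp at this
    · exact h

theorem lemmaM (e : ℕ) (he : e = 0 ∨ e = 1) (c : ℂ) (hc : c ≠ 0) (N n : ℕ) (hn : n + 1 = 2 * N + e)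
    (I : Ideal SS) [Module.Finite ℂ (SS ⧸ I)] (hI : JS e c (n + 1) ≤ I)
    (hcond : e = 1 ∨ Polynomial.X ^ N ∈ I ∨ Even N) : Z e c n ∈ I := by
  by_contra hcon
  have hw := wa_zero SS e c
  have hK : ¬ JS e c n ≤ I := fun h => hcon (h (zz_mem hw le_rfl))
  obtain ⟨l, x, hlI, hla, s, hs, hls⟩ := eig I (JS e c n) (Polynomial.C Polynomial.X) hK
  have hI2 : JS e c (n + 2) ≤ I := (JJ_anti hw (by omega)).trans hI
  set f : ℕ → ℂ := fun j => if 2 * j + e = 0 then 0 else 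
    l (Polynomial.X ^ (N - j) * Z e c (2 * j + e - 1)) with hf
  set g : ℕ → ℂ := fun j => l (Polynomial.X ^ (N - j) * Z e c (2 * j + e)) with hg
  have hA : ∀ j ≤ N, x * g j + c * ((2 * j + e : ℕ) : ℂ) ^ 2 * f j
      + 2 * ((2 * j + e : ℕ) : ℂ) * (((2 * j + e : ℕ) : ℂ) - 1) * g (j - 1) = 0 := by
    intro j hj
    have h1 := congrArg l (Z_A e c (N - j) (2 * j + e) (by omega))
    rw [hlI _ (hI2 (Z_pow_mem e he c _ _ _ (by omega) (by omega))), map_add, map_add,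
      hla _ (Z_pow_mem e he c _ _ _ (by omega) (by omega)), map_smul, map_smul] at h1
    have h2 : c * ((2 * j + e : ℕ) : ℂ) ^ 2 * f j = 
       c * ((2 * j + e : ℕ) : ℂ) ^ 2 * l (Polynomial.X ^ (N - j) * Z e c (2 * j + e - 1)) := by
      by_cases h : 2 * j + e = 0
      · rw [h]; simp
      · simp only [hf, h, if_false]
    have h3 : 2 * ((2 * j + e : ℕ) : ℂ) * (((2 * j + e : ℕ) : ℂ) - 1) * g (j - 1) = 
       2 * ((2 * j + e : ℕ) : ℂ) * (((2 * j + e : ℕ) : ℂ) - 1) *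
         l (Polynomial.X ^ (N - j + 1) * Z e c (2 * j + e - 2)) := by
      by_cases h : j = 0
      · subst h
        rcases he with rfl | rfl <;> simp
      · simp only [hg]
        rw [show N - (j - 1) = N - j + 1 by omega, show 2 * (j - 1) + e = 2 * j + e - 2 by omega]
    rw [h2, h3]
    simp only [smul_eq_mul] at h1
    exact h1.symm
  have hB : ∀ j ≤ N, 1 ≤ 2 * j + e → g j = x * f j
      + 2 * (((2 * j + e : ℕ) : ℂ) - 1) * (((2 * j + e : ℕ) : ℂ) - 2) * f (j - 1) := by
    intro j hj hpos
    have h1 := congrArg l (Z_B e c (N - j) (2 * j + e - 1) (by omega))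
    rw [show 2 * j + e - 1 + 1 = 2 * j + e by omega, map_add,
      hla _ (Z_pow_mem e he c _ _ _ (by omega) (by omega)), map_smul] at h1
    have hcast : ((2 * j + e - 1 : ℕ) : ℂ) = ((2 * j + e : ℕ) : ℂ) - 1 := by
      rw [Nat.cast_sub hpos]; simp
    have h2 : f j = l (Polynomial.X ^ (N - j) * Z e c (2 * j + e - 1)) := by
      simp only [hf, show ¬ (2 * j + e = 0) by omega, if_false]
    have h3 : 2 * (((2 * j + e : ℕ) : ℂ) - 1) * (((2 * j + e : ℕ) : ℂ) - 2) * f (j - 1) = 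
       2 * (((2 * j + e : ℕ) : ℂ) - 1) * (((2 * j + e : ℕ) : ℂ) - 2) *
         l (Polynomial.X ^ (N - j + 1) * Z e c (2 * j + e - 1 - 2)) := by
      by_cases h : 2 * j + e = 1
      · rw [h]; simp
      by_cases h' : 2 * j + e = 2
      · rw [h']; simp
      simp only [hf, show ¬ (2 * (j - 1) + e = 0) by omega, if_false]
      rw [show N - (j - 1) = N - j + 1 by omega, show 2 * (j - 1) + e - 1 = 2 * j + e - 1 - 2 by omega]
    rw [h3, h2]
    rw [hcast] at h1
    simp only [smul_eq_mul] at h1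
    simp only [hg]
    rw [h1]
    ring
  have hgN : g N = 0 := by
    simp only [hg]
    apply hlI
    apply hI
    rw [Nat.sub_self, pow_zero, one_mul, ← hn]
    exact zz_mem hw le_rfl
  have h00 : e = 0 → f 0 = 0 := by rintro rfl; simp [hf]
  have hg0 : e = 0 → g 0 = 0 := by
    rintro rfl
    by_cases hx : x = 0
    · rcases hcond with h | h | h
      · omega
      · simp only [hg]
        apply hlI
        simpa using Ideal.mul_mem_right _ _ h
      · obtain ⟨i, hi⟩ := h
        refine numeric0 N c f g (by rw [hx] at hA; exact hA) ?_ i (by omega) (by rw [two_mul, ← hi]; exact hgN)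
        intro j h1 h2
        have := hB j h1 (by omega)
        rwa [hx] at this
    · have := hA 0 (by omega)
      simp at this
      tauto
  have hfN : f N = 0 := by
    refine numeric e N he c x f g hc hA ?_ h00 hgN
    intro j hj
    by_cases h : 1 ≤ 2 * j + e
    · exact hB j hj h
    · have h1 : e = 0 := by omega
      have h2 : j = 0 := by omega
      rw [h2, hg0 h1, h00 h1]
      simp
  have hle : l (Z e c n) = 0 := by
    have : ¬ (2 * N + e = 0) := by omega
    simp only [hf, this, if_false, Nat.sub_self, pow_zero, one_mul] at hfN
    rwa [← hn] at hfN
  have hq : ∀ q : SS, l (q * Z e c n) = 0 := by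
    intro q
    have hxe : Polynomial.X * Z e c n ∈ I := hI2 (by
      simpa using Z_pow_mem e he c 1 (n + 2) n (by omega) (by omega))
    have hdiv : q = Polynomial.C (q.coeff 0) + Polynomial.X * q.divX := by
      rw [add_comm, mul_comm, Polynomial.divX_mul_X_add]
    rw [hdiv, add_mul, map_add, mul_assoc, mul_left_comm, hlI _ (Ideal.mul_mem_left _ _ hxe), add_zero]
    generalize q.coeff 0 = p
    have hpow : ∀ k : ℕ, (Polynomial.C Polynomial.X ^ k * Z e c n ∈ JS e c n) ∧ 
        l (Polynomial.C Polynomial.X ^ k * Z e c n) = 0 := by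
      intro k
      refine ⟨Ideal.mul_mem_left _ _ (zz_mem hw le_rfl), ?_⟩
      induction k with
      | zero => simpa using hle
      | succ k ih =>
        rw [pow_succ', mul_assoc, hla (Polynomial.C Polynomial.X ^ k * Z e c n) (Ideal.mul_mem_left _ _ (zz_mem hw le_rfl)), ih, mul_zero]
    induction p using Polynomial.induction_on' with
    | add p q hp hq => rw [map_add, add_mul, map_add, hp, hq, add_zero]
    | monomial k y =>
      have : (Polynomial.C (Polynomial.monomial k y) * Z e c n : SS) 
          = y • (Polynomial.C Polynomial.X ^ k * Z e c n) := by
        rw [← Polynomial.C_mul_X_pow_eq_monomial, map_mul, map_pow, mul_assoc, Algebra.smul_def]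
        rfl
      rw [this, map_smul, (hpow k).2, smul_zero]
  apply hls
  rw [JS, JJ, Ideal.mem_span_insert] at hs
  obtain ⟨q, z, hz, rfl⟩ := hs
  rw [map_add]
  have : z ∈ I := by
    apply hI
    refine Ideal.span_mono ?_ hz
    intro y hy
    rcases hy with rfl | rfl <;> simp
  rw [hlI z this, add_zero]
  exact hq q


theorem xk_parity (c : ℂ) (h : Polynomial ℂ) (ho : h.comp (-Polynomial.X) = -h) (k : ℕ) :
    (zz (wa (Polynomial ℂ) 0 c) h Polynomial.X k).comp (-Polynomial.X) =
      (-1) ^ k * zz (wa (Polynomial ℂ) 0 c) h Polynomial.X k := by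
  induction k using Nat.strong_induction_on with
  | _ k ih =>
    match k with
    | 0 => simp [zz_zero]
    | 1 => simp [zz_one, ho]
    | 2 =>
      have e2 := zz_succ (wa (Polynomial ℂ) 0 c) h Polynomial.X (wa_zero _ _ _) 1
      rw [wa_good _ _ _ _ (by norm_num)] at e2
      norm_num [zz_one] at e2
      rw [e2]; simp [ho]
    | k + 3 =>
      have e2 := zz_succ (wa (Polynomial ℂ) 0 c) h Polynomial.X (wa_zero _ _ _) (k + 2)
      simp only [Nat.add_sub_cancel, show k + 2 - 1 = k + 1 by omega] at e2
      rw [show k + 3 = k + 2 + 1 by ring, e2]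
      simp only [Polynomial.add_comp, Polynomial.mul_comp, Polynomial.sub_comp, Polynomial.natCast_comp,
        Polynomial.one_comp, ih (k + 2) (by omega), ih (k + 1) (by omega), ih k (by omega), ho,
        Polynomial.X_comp, Polynomial.ofNat_comp]
      have : (wa (Polynomial ℂ) 0 c (k + 2)).comp (-Polynomial.X) = wa (Polynomial ℂ) 0 c (k + 2) := by
        rw [wa, Polynomial.algebraMap_apply, Polynomial.C_comp]
      rw [this]
      ring

theorem coeff_parity (p : Polynomial ℂ) (k n : ℕ) (h : p.comp (-Polynomial.X) = (-1) ^ k * p)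
    (hkn : (k + n) % 2 = 1) : p.coeff n = 0 := by
  have h1 : (p.comp (-Polynomial.X)).coeff n = (-1) ^ n * p.coeff n := by
    rw [show (-Polynomial.X : Polynomial ℂ) = Polynomial.C (-1) * Polynomial.X by simp,
      Polynomial.comp_C_mul_X_coeff, mul_comm]
  rw [h] at h1
  have h2 : ((-1) ^ k * p).coeff n = (-1) ^ k * p.coeff n := by
    rw [show ((-1) ^ k : Polynomial ℂ) = Polynomial.C ((-1) ^ k) by simp, Polynomial.coeff_C_mul]
  rw [h2] at h1
  have h3 : (-1 : ℂ) ^ k = - (-1) ^ n := by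
    rcases Nat.even_or_odd k with hk | hk <;> rcases Nat.even_or_odd n with hn | hn
    · exfalso; obtain ⟨u, hu⟩ := hk; obtain ⟨v, hv⟩ := hn; omega
    · rw [hk.neg_one_pow, hn.neg_one_pow]; ring
    · rw [hk.neg_one_pow, hn.neg_one_pow]
    · exfalso; obtain ⟨u, hu⟩ := hk; obtain ⟨v, hv⟩ := hn; omega
  have h4 : (-1 : ℂ) ^ n * p.coeff n = 0 := by
    rw [h3] at h1; linear_combination (-1/2) * h1
  simpa using h4

theorem dvd_succ (p : Polynomial ℂ) (n : ℕ) (h : Polynomial.X ^ n ∣ p) (h0 : p.coeff n = 0) :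
    Polynomial.X ^ (n + 1) ∣ p := by
  rw [Polynomial.X_pow_dvd_iff] at h ⊢
  intro d hd
  rcases Nat.lt_succ_iff_lt_or_eq.1 hd with h' | rfl
  · exact h d h'
  · exact h0

theorem X_dvd_xk (c : ℂ) (h : Polynomial ℂ) (hX : Polynomial.X ∣ h) (k : ℕ) (hk : 1 ≤ k) :
    Polynomial.X ∣ zz (wa (Polynomial ℂ) 0 c) h Polynomial.X k := by
  induction k using Nat.strong_induction_on with
  | _ k ih =>
    match k with
    | 1 => rwa [zz_one]
    | 2 =>
      have e2 := zz_succ (wa (Polynomial ℂ) 0 c) h Polynomial.X (wa_zero _ _ _) 1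
      rw [wa_good _ _ _ _ (by norm_num)] at e2
      norm_num [zz_one] at e2
      rw [e2]; exact Dvd.dvd.mul_left hX _
    | k + 3 =>
      have e2 := zz_succ (wa (Polynomial ℂ) 0 c) h Polynomial.X (wa_zero _ _ _) (k + 2)
      simp only [Nat.add_sub_cancel, show k + 2 - 1 = k + 1 by omega] at e2
      rw [show k + 3 = k + 2 + 1 by ring, e2]
      refine dvd_add (dvd_add (Dvd.dvd.mul_right hX _) (Dvd.dvd.mul_left (ih (k + 1) (by omega) (by omega)) _)) ?_
      exact Dvd.dvd.mul_right (Dvd.dvd.mul_left dvd_rfl _) _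

theorem delta_dvd (c : ℂ) (h u : Polynomial ℂ) (M : ℕ) (hu : Polynomial.X ^ M ∣ u) (k : ℕ) :
    Polynomial.X ^ M ∣ zz (wa (Polynomial ℂ) 0 c) (h + u) Polynomial.X k -
      zz (wa (Polynomial ℂ) 0 c) h Polynomial.X k := by
  induction k using Nat.strong_induction_on with
  | _ k ih =>
    match k with
    | 0 => simp [zz_zero]
    | k + 1 =>
      have e1 := zz_succ (wa (Polynomial ℂ) 0 c) h Polynomial.X (wa_zero _ _ _) k
      have e2 := zz_succ (wa (Polynomial ℂ) 0 c) (h + u) Polynomial.X (wa_zero _ _ _) k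
      obtain ⟨p1, h1⟩ := ih k (by omega)
      obtain ⟨p2, h2⟩ := ih (k - 1) (by omega)
      obtain ⟨p3, h3⟩ := ih (k - 2) (by omega)
      obtain ⟨p4, h4⟩ := hu
      rw [e1, e2]
      refine ⟨(h + u) * p1 + p4 * zz (wa (Polynomial ℂ) 0 c) h Polynomial.X k
        + wa (Polynomial ℂ) 0 c k * p2 + 2 * (k : Polynomial ℂ) * ((k : Polynomial ℂ) - 1) * Polynomial.X * p3, ?_⟩
      linear_combination (h + u) * h1 + zz (wa (Polynomial ℂ) 0 c) h Polynomial.X k * h4 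
        + wa (Polynomial ℂ) 0 c k * h2 + 2 * (k : Polynomial ℂ) * ((k : Polynomial ℂ) - 1) * Polynomial.X * h3

theorem delta_odd (c : ℂ) (hc : c ≠ 0) (h : Polynomial ℂ) (M : ℕ)
    (hX : Polynomial.X ∣ h) (j : ℕ) : ∃ D : ℂ, D ≠ 0 ∧ ∀ u : Polynomial ℂ, Polynomial.X ^ (M + 1) ∣ u →
     Polynomial.X ^ (M + 2) ∣
     zz (wa (Polynomial ℂ) 0 c) (h + u) Polynomial.X (2 * j + 1) -
      zz (wa (Polynomial ℂ) 0 c) h Polynomial.X (2 * j + 1) - Polynomial.C D * u := by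
  induction j with
  | zero => exact ⟨1, one_ne_zero, fun u _ => by simp [zz_one]⟩
  | succ j ih =>
    obtain ⟨D, hD, ih⟩ := ih
    have e1 := zz_succ (wa (Polynomial ℂ) 0 c) h Polynomial.X (wa_zero _ _ _) (2 * j + 2)
    have hw : wa (Polynomial ℂ) 0 c (2 * j + 2) = Polynomial.C (c * ((2 * j + 2 : ℕ) : ℂ) ^ 2) := by
      rw [wa, ww, if_pos (by omega), Polynomial.algebraMap_apply]; rfl
    refine ⟨c * ((2 * j + 2 : ℕ) : ℂ) ^ 2 * D, ?_, ?_⟩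
    · refine mul_ne_zero (mul_ne_zero hc (pow_ne_zero _ ?_)) hD
      exact_mod_cast (by omega : 2 * j + 2 ≠ 0)
    · intro u hu
      have e2 := zz_succ (wa (Polynomial ℂ) 0 c) (h + u) Polynomial.X (wa_zero _ _ _) (2 * j + 2)
      simp only [Nat.add_sub_cancel, show 2 * j + 2 - 1 = 2 * j + 1 by omega] at e1 e2
      obtain ⟨p, hp⟩ := ih u hu
      obtain ⟨p1, h1⟩ := delta_dvd c h u (M + 1) hu (2 * j + 2)
      obtain ⟨p3, h3⟩ := delta_dvd c h u (M + 1) hu (2 * j)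
      obtain ⟨q, hq⟩ := X_dvd_xk c h hX (2 * j + 2) (by omega)
      have hXu : Polynomial.X ∣ h + u := dvd_add hX ((dvd_pow_self _ (by omega)).trans hu)
      obtain ⟨v, hv⟩ := hXu
      obtain ⟨p4, h4⟩ := hu
      rw [show 2 * (j + 1) + 1 = 2 * j + 2 + 1 by ring, e1, e2, hw]
      set W := Polynomial.C (c * ((2 * j + 2 : ℕ) : ℂ) ^ 2) with hW
      rw [map_mul, ← hW]
      set n : Polynomial ℂ := ((2 * j + 2 : ℕ) : Polynomial ℂ)
      refine ⟨v * p1 + p4 * q + W * p + 2 * n * (n - 1) * p3, ?_⟩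
      linear_combination (h + u) * h1 + zz (wa (Polynomial ℂ) 0 c) h Polynomial.X (2 * j + 2) * h4
        + W * hp + 2 * n * (n - 1) * Polynomial.X * h3 + Polynomial.X ^ (M + 1) * p1 * hv
        + Polynomial.X ^ (M + 1) * p4 * hq

theorem exists_h (c : ℂ) (hc : c ≠ 0) (M : ℕ) : ∃ h : Polynomial ℂ, h.comp (-Polynomial.X) = -h ∧
    Polynomial.X ∣ h ∧ ∀ y ∈ JJ (wa (Polynomial ℂ) 0 c) h Polynomial.X (2 * M + 1),
      Polynomial.X ^ (M + 1) ∣ y := by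
  have hw := wa_zero (Polynomial ℂ) 0 c
  induction M with
  | zero =>
    refine ⟨0, by simp, by simp, ?_⟩
    intro y hy
    rw [Nat.mul_zero, Nat.zero_add, JJ_one hw (wa_good _ _ _ _ (by norm_num))] at hy
    obtain ⟨r, y, rfl⟩ := hy
    simp
  | succ M ih =>
    obtain ⟨h, ho, hX, hJ⟩ := ih
    obtain ⟨u, hu, huo, hd⟩ : ∃ u : Polynomial ℂ, Polynomial.X ^ (M + 1) ∣ u ∧ 
        u.comp (-Polynomial.X) = -u ∧ Polynomial.X ^ (M + 2) ∣
        zz (wa (Polynomial ℂ) 0 c) (h + u) Polynomial.X (2 * (M + 1) + 1) := by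
      have hd0 : Polynomial.X ^ (M + 1) ∣ zz (wa (Polynomial ℂ) 0 c) h Polynomial.X (2 * (M + 1) + 1) :=
        hJ _ (zz_mem hw (by omega))
      by_cases hM : M % 2 = 0
      · set b := (zz (wa (Polynomial ℂ) 0 c) h Polynomial.X (2 * (M + 1) + 1)).coeff (M + 1) with hb
        obtain ⟨D, hD, hDu⟩ := delta_odd c hc h M hX (M + 1)
        have hu : (Polynomial.X : Polynomial ℂ) ^ (M + 1) ∣ Polynomial.C (-b / D) * Polynomial.X ^ (M + 1) :=
          Dvd.dvd.mul_left dvd_rfl _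
        refine ⟨Polynomial.C (-b / D) * Polynomial.X ^ (M + 1), hu, ?_, ?_⟩
        · simp only [Polynomial.mul_comp, Polynomial.C_comp, Polynomial.X_pow_comp]
          rw [Odd.neg_pow (by rw [Nat.odd_iff]; omega)]; ring
        · apply dvd_succ
          · exact (dvd_iff_dvd_of_dvd_sub (delta_dvd c h _ (M + 1) hu _)).2 hd0
          · have h1 := Polynomial.X_pow_dvd_iff.1 (hDu _ hu) (M + 1) (by omega)
            simp only [Polynomial.coeff_sub, Polynomial.coeff_C_mul, Polynomial.coeff_X_pow, if_true, ← hb] at h1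
            have h2 : D * (-b / D) = -b := by field_simp
            linear_combination h1 + h2
      · refine ⟨0, by simp, by simp, ?_⟩
        rw [add_zero]
        exact dvd_succ _ _ hd0 (coeff_parity _ _ _ (xk_parity c h ho _) (by omega))
    refine ⟨h + u, by rw [Polynomial.add_comp, ho, huo]; ring, 
      dvd_add hX ((dvd_pow_self _ (by omega)).trans hu), ?_⟩
    intro y hy
    have hJ' : JJ (wa (Polynomial ℂ) 0 c) (h + u) Polynomial.X (2 * M + 1) ≤ 
        Ideal.span {Polynomial.X ^ (M + 1)} := by
      have : ∀ k, 2 * M + 1 ≤ k → zz (wa (Polynomial ℂ) 0 c) (h + u) Polynomial.X k ∈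
          Ideal.span {(Polynomial.X : Polynomial ℂ) ^ (M + 1)} := by
        intro k hk
        rw [Ideal.mem_span_singleton]
        exact (dvd_iff_dvd_of_dvd_sub (delta_dvd c h u (M + 1) hu k)).2 (hJ _ (zz_mem hw hk))
      exact JJ_le (this _ (by omega)) (this _ (by omega)) (this _ (by omega))
    obtain ⟨r, y', hy', rfl⟩ := good_eq (g := 2 * M + 1) hw (wa_good _ _ _ _ (by omega)) hy
    refine dvd_add (Dvd.dvd.mul_left hd _) ?_
    rw [pow_succ']
    exact mul_dvd_mul_left _ (Ideal.mem_span_singleton.1 (hJ' hy'))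

/-- `γ^N ∉ J_{2N}` for odd `N` in the case β = 8. -/
theorem not_mem (c : ℂ) (hc : c ≠ 0) (N : ℕ) (hN : N % 2 = 1) : Z 0 c (2 * N - 1) ∉ JS 0 c (2 * N) := by
  intro hmem
  have hwS := wa_zero SS 0 c
  have hw := wa_zero (Polynomial ℂ) 0 c
  have hle : JS 0 c (2 * N - 1) ≤ JS 0 c (2 * N) := by
    refine JJ_le hmem ?_ ?_ <;> apply zz_mem hwS <;> omega
  have ht : Polynomial.X ^ N ∈ JS 0 c (2 * N) := by
    have := hle (Z_pow_mem 0 (Or.inl rfl) c N (2 * N - 1) 0 (by omega) (by omega))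
    rwa [Z, zz_zero, mul_one] at this
  obtain ⟨h, ho, hX, hJ⟩ := exists_h c hc N
  let φ : SS →+* Polynomial ℂ := 
    Polynomial.eval₂RingHom (Polynomial.aeval h : Polynomial ℂ →ₐ[ℂ] Polynomial ℂ).toRingHom Polynomial.X
  have hφ : ∀ k, φ (Z 0 c k) = zz (wa (Polynomial ℂ) 0 c) h Polynomial.X k := by
    intro k
    rw [Z, map_zz φ _ _ _ hwS]
    congr 1
    · ext1 k
      simp [φ, wa, Polynomial.algebraMap_apply]
    · simp [φ]
    · simp [φ]
  have h2N : Polynomial.X ^ (N + 1) ∣ zz (wa (Polynomial ℂ) 0 c) h Polynomial.X (2 * N) := by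
    apply dvd_succ
    · have h1 := hJ _ (t_mul_mem hw (zz_mem (a := h) (t := Polynomial.X) hw (le_refl (2 * N))))
      rw [pow_succ'] at h1
      exact (mul_dvd_mul_iff_left Polynomial.X_ne_zero).1 h1
    · exact coeff_parity _ _ _ (xk_parity c h ho _) (by omega)
  have hall : JS 0 c (2 * N) ≤ (Ideal.span {(Polynomial.X : Polynomial ℂ) ^ (N + 1)}).comap φ := by
    refine JJ_le ?_ ?_ ?_ <;> rw [Ideal.mem_comap, ← Z, hφ, Ideal.mem_span_singleton]
    · exact h2N
    · exact hJ _ (zz_mem hw (by omega))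
    · exact hJ _ (zz_mem hw (by omega))
  have := hall ht
  rw [Ideal.mem_comap, Ideal.mem_span_singleton, map_pow] at this
  have h3 : φ Polynomial.X = Polynomial.X := by simp [φ]
  rw [h3, Polynomial.X_pow_dvd_iff] at this
  simpa using this N (by omega)


theorem Z_monic (e : ℕ) (c : ℂ) (k : ℕ) : ((Z e c k).coeff 0).Monic ∧ ((Z e c k).coeff 0).natDegree = k := by
  have key : ∀ k, (Z e c k).coeff 0 = zz (fun k => Polynomial.C (ww e c k)) Polynomial.X 0 k := by
    intro k
    have := map_zz (Polynomial.constantCoeff (R := Polynomial ℂ)) (wa SS e c)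
      (Polynomial.C Polynomial.X) Polynomial.X (wa_zero _ _ _) k
    simp only [Polynomial.constantCoeff_apply] at this
    rw [Z, this]
    congr 1
    · ext1 k
      simp [wa, Polynomial.algebraMap_apply]
    · simp
    · simp
  have hw : (fun k => Polynomial.C (ww e c k)) 0 = 0 := by simp [ww]
  simp only [key]
  induction k using Nat.strong_induction_on with
  | _ k ih =>
    match k with
    | 0 => simp [zz_zero]
    | 1 => simp [zz_one, Polynomial.monic_X]
    | k + 2 =>
      rw [zz_succ _ _ _ hw]
      simp only [mul_zero, zero_mul, add_zero]
      obtain ⟨m1, d1⟩ := ih (k + 1) (by omega)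
      obtain ⟨m2, d2⟩ := ih k (by omega)
      rw [show k + 1 - 1 = k by omega]
      set P := zz (fun k => Polynomial.C (ww e c k)) Polynomial.X 0 (k + 1)
      set Q := zz (fun k => Polynomial.C (ww e c k)) Polynomial.X 0 k
      have hm : (Polynomial.X * P).Monic := Polynomial.monic_X.mul m1
      have hd : (Polynomial.X * P).natDegree = k + 2 := by
        rw [Polynomial.natDegree_X_mul m1.ne_zero, d1]
      have hlt : (Polynomial.C (ww e c (k + 1)) * Q).degree < (Polynomial.X * P).degree := by
        refine lt_of_le_of_lt (b := Q.degree) (by rw [← Polynomial.smul_eq_C_mul]; exact Polynomial.degree_smul_le _ _) ?_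
        rw [Polynomial.degree_eq_natDegree m2.ne_zero, Polynomial.degree_eq_natDegree hm.ne_zero, hd, d2]
        exact_mod_cast (by omega : k < k + 2)
      refine ⟨hm.add_of_left hlt, ?_⟩
      rw [Polynomial.natDegree_add_eq_left_of_degree_lt hlt, hd]

theorem rank_good (z : SS) (g : ℕ) (hz : (z.coeff 0).Monic) (hd : (z.coeff 0).natDegree = g)
    (I I' : Ideal SS) (hzI : z ∈ I)
    (hI' : ∀ x, x ∈ I' ↔ ∃ r, ∃ y ∈ I, x = r * z + Polynomial.X * y) :
    Module.rank ℂ (SS ⧸ I') = g + Module.rank ℂ (SS ⧸ I) := by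
  let Q := Polynomial ℂ ⧸ Ideal.span {z.coeff 0}
  let c0 : SS →ₐ[ℂ] Polynomial ℂ := (Polynomial.aeval (0 : Polynomial ℂ)).restrictScalars ℂ
  have hc0 : ∀ f, c0 f = f.coeff 0 := fun f => (Polynomial.coeff_zero_eq_aeval_zero f).symm
  let ψ0 : SS →ₐ[ℂ] Q := (Ideal.Quotient.mkₐ ℂ (Ideal.span {z.coeff 0})).comp c0
  have hψ0 : ∀ f, ψ0 f = 0 ↔ z.coeff 0 ∣ f.coeff 0 := by
    intro f
    show Ideal.Quotient.mk _ (c0 f) = 0 ↔ _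
    rw [Ideal.Quotient.eq_zero_iff_mem, Ideal.mem_span_singleton, hc0]
  let ψ : (SS ⧸ I') →ₐ[ℂ] Q := Ideal.Quotient.liftₐ I' ψ0 (by
    intro x hx
    obtain ⟨r, y, hy, rfl⟩ := (hI' x).1 hx
    rw [hψ0]
    simp)
  have hψ : ∀ f, ψ (Ideal.Quotient.mk I' f) = ψ0 f := fun f => rfl
  have hsurj : Function.Surjective ψ := by
    intro q
    obtain ⟨p, rfl⟩ := Ideal.Quotient.mk_surjective q
    refine ⟨Ideal.Quotient.mk I' (Polynomial.C p), ?_⟩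
    rw [hψ]
    show Ideal.Quotient.mk _ (c0 _) = _
    rw [hc0]; simp
  let φ0 : (SS ⧸ I) →ₗ[SS] (SS ⧸ I') := Submodule.mapQ I I' (LinearMap.mulLeft SS Polynomial.X) (by
    intro y hy
    show Polynomial.X * y ∈ I'
    exact (hI' _).2 ⟨0, y, hy, by ring⟩)
  let φ : (SS ⧸ I) →ₗ[ℂ] (SS ⧸ I') := φ0.restrictScalars ℂ
  have hφ : ∀ f, φ (Ideal.Quotient.mk I f) = Ideal.Quotient.mk I' (Polynomial.X * f) := fun f => rfl
  have hinj : Function.Injective φ := by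
    rw [injective_iff_map_eq_zero]
    intro q hq
    obtain ⟨f, rfl⟩ := Ideal.Quotient.mk_surjective q
    rw [hφ, Ideal.Quotient.eq_zero_iff_mem, hI'] at hq
    obtain ⟨r, y, hy, h⟩ := hq
    have h0 := congrArg (fun p => Polynomial.coeff p 0) h
    simp only [Polynomial.mul_coeff_zero, Polynomial.coeff_add, Polynomial.coeff_X_zero, zero_mul, add_zero] at h0
    have hr : r.coeff 0 = 0 := by
      rcases mul_eq_zero.1 h0.symm with h | h
      · exact h
      · exact absurd h hz.ne_zero
    obtain ⟨r', rfl⟩ := Polynomial.X_dvd_iff.2 hr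
    have : f = r' * z + y := by
      apply mul_left_cancel₀ (Polynomial.X_ne_zero : (Polynomial.X : SS) ≠ 0)
      rw [h]; ring
    rw [Ideal.Quotient.eq_zero_iff_mem, this]
    exact add_mem (I.mul_mem_left _ hzI) hy
  have hker : LinearMap.ker ψ.toLinearMap = LinearMap.range φ := by
    ext q
    obtain ⟨f, rfl⟩ := Ideal.Quotient.mk_surjective q
    rw [LinearMap.mem_ker, LinearMap.mem_range, AlgHom.toLinearMap_apply, hψ, hψ0]
    constructor
    · rintro ⟨p, hp⟩
      have : (f - Polynomial.C p * z).coeff 0 = 0 := by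
        simp [hp, mul_comm]
      obtain ⟨y, hy⟩ := Polynomial.X_dvd_iff.2 this
      refine ⟨Ideal.Quotient.mk I y, ?_⟩
      rw [hφ, Ideal.Quotient.eq, ← hy, hI']
      exact ⟨-Polynomial.C p, 0, zero_mem _, by ring⟩
    · rintro ⟨y, hy⟩
      obtain ⟨y, rfl⟩ := Ideal.Quotient.mk_surjective y
      rw [hφ, Ideal.Quotient.eq, hI'] at hy
      obtain ⟨r, y', hy', h⟩ := hy
      have h0 := congrArg (fun p => Polynomial.coeff p 0) h
      simp at h0
      refine ⟨- r.coeff 0, ?_⟩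
      linear_combination -h0
  have h1 := LinearMap.rank_eq_of_surjective (f := ψ.toLinearMap) hsurj
  rw [hker, ← (LinearEquiv.ofInjective φ hinj).rank_eq] at h1
  rw [h1]
  congr 1
  have : Module.Finite ℂ Q := hz.finite_quotient
  rw [← Module.finrank_eq_rank ℂ Q, finrank_quotient_span_eq_natDegree, hd]

theorem rank_step (I K : Ideal SS) (e : SS) (heK : e ∈ K) (heI : e ∉ I) (hIK : I ≤ K)
    (hK : ∀ s ∈ K, ∃ r, s - r * e ∈ I) (ha : Polynomial.C Polynomial.X * e ∈ I) (ht : Polynomial.X * e ∈ I) :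
    Module.rank ℂ (SS ⧸ I) = Module.rank ℂ (SS ⧸ K) + 1 := by
  let ψ : (SS ⧸ I) →ₐ[ℂ] SS ⧸ K := Ideal.Quotient.factorₐ ℂ hIK
  have hψ : ∀ f, ψ (Ideal.Quotient.mk I f) = Ideal.Quotient.mk K f := fun f => rfl
  have hsurj : Function.Surjective ψ := by
    intro q
    obtain ⟨p, rfl⟩ := Ideal.Quotient.mk_surjective q
    exact ⟨Ideal.Quotient.mk I p, rfl⟩
  have h1 := LinearMap.rank_eq_of_surjective (f := ψ.toLinearMap) hsurj
  rw [h1]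
  congr 1
  have hker : LinearMap.ker ψ.toLinearMap = Submodule.span ℂ {Ideal.Quotient.mk I e} := by
    ext q
    obtain ⟨f, rfl⟩ := Ideal.Quotient.mk_surjective q
    rw [LinearMap.mem_ker, AlgHom.toLinearMap_apply, hψ, Submodule.mem_span_singleton,
      Ideal.Quotient.eq_zero_iff_mem]
    constructor
    · intro hf
      obtain ⟨r, hr⟩ := hK f hf
      refine ⟨(r.coeff 0).coeff 0, ?_⟩
      have h2 : (r.coeff 0).coeff 0 • (Ideal.Quotient.mk I e) = 
        Ideal.Quotient.mk I (Polynomial.C (Polynomial.C ((r.coeff 0).coeff 0)) * e) := by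
        refine (Algebra.smul_def (A := SS ⧸ I) _ _).trans ?_
        rw [map_mul]; rfl
      rw [h2, Ideal.Quotient.eq]
      have hdiv : r = Polynomial.C (r.coeff 0) + Polynomial.X * r.divX := by
        rw [add_comm, mul_comm, Polynomial.divX_mul_X_add]
      have hdiv2 : r.coeff 0 = Polynomial.C ((r.coeff 0).coeff 0) + Polynomial.X * (r.coeff 0).divX := by
        rw [add_comm, mul_comm, Polynomial.divX_mul_X_add]
      have hdiv3 : Polynomial.C (r.coeff 0) = Polynomial.C (Polynomial.C ((r.coeff 0).coeff 0)) + 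
        Polynomial.C Polynomial.X * Polynomial.C (r.coeff 0).divX := by
        rw [← map_mul, ← map_add, ← hdiv2]
      have : Polynomial.C (Polynomial.C ((r.coeff 0).coeff 0)) * e - f = 
         - (f - r * e) - Polynomial.C (r.coeff 0).divX * (Polynomial.C Polynomial.X * e) 
           - r.divX * (Polynomial.X * e) := by
        linear_combination (-e) * hdiv - e * hdiv3
      rw [this]
      exact sub_mem (sub_mem (neg_mem hr) (I.mul_mem_left _ ha)) (I.mul_mem_left _ ht)
    · rintro ⟨y, hy⟩
      have := congrArg ψ hy
      rw [map_smul, hψ, hψ, Ideal.Quotient.eq_zero_iff_mem.2 heK, smul_zero] at this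
      rw [← Ideal.Quotient.eq_zero_iff_mem, this]
  rw [hker]
  have hne : Ideal.Quotient.mk I e ≠ 0 := by
    rw [Ne, Ideal.Quotient.eq_zero_iff_mem]; exact heI
  have h3 := finrank_span_singleton (K := ℂ) hne
  rw [← Module.finrank_eq_rank, h3]; simp

theorem rank_quot_top : Module.rank ℂ (SS ⧸ (⊤ : Ideal SS)) = 0 := by
  have : Subsingleton (SS ⧸ (⊤ : Ideal SS)) := Ideal.Quotient.subsingleton_iff.2 rfl
  exact rank_subsingleton' _ _

theorem rank_rec (e : ℕ) (c : ℂ) (g : ℕ) (hg : g % 2 ≠ e) :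
    Module.rank ℂ (SS ⧸ JS e c (g + 2)) = (g + 2 : ℕ) + Module.rank ℂ (SS ⧸ JS e c g) := by
  have hw := wa_zero SS e c
  have hwg : wa SS e c (g + 2) = 0 := wa_good _ _ _ _ (by omega)
  refine rank_good (Z e c (g + 2)) (g + 2) (Z_monic e c _).1 (Z_monic e c _).2 _ _ (zz_mem hw (by omega)) ?_
  intro x
  constructor
  · intro hx
    exact good_eq hw hwg hx
  · rintro ⟨r, y, hy, rfl⟩
    exact add_mem (Ideal.mul_mem_left _ _ (zz_mem hw le_rfl)) (good_mul hw hwg hy)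

theorem rank_even (c : ℂ) (m : ℕ) : Module.rank ℂ (SS ⧸ JS 1 c (2 * m)) = (m * (m + 1) : ℕ) := by
  induction m with
  | zero => rw [Nat.mul_zero, JS, JJ_zero, rank_quot_top]; simp
  | succ m ih =>
    rw [show 2 * (m + 1) = 2 * m + 2 by ring, rank_rec 1 c _ (by omega), ih]
    norm_cast; ring

theorem rank_odd (c : ℂ) (m : ℕ) : Module.rank ℂ (SS ⧸ JS 0 c (2 * m + 1)) = ((m + 1) ^ 2 : ℕ) := by
  induction m with
  | zero =>
    have hw := wa_zero SS 0 c
    have := rank_good (Z 0 c 1) 1 (Z_monic 0 c _).1 (Z_monic 0 c _).2 ⊤ (JS 0 c 1) trivial (by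
      intro x
      rw [JS, JJ_one hw (wa_good _ _ _ _ (by omega)), Z, zz_one]
      simp)
    rw [Nat.mul_zero, Nat.zero_add, this, rank_quot_top]; simp
  | succ m ih =>
    rw [show 2 * (m + 1) + 1 = 2 * m + 1 + 2 by ring, rank_rec 0 c _ (by omega), ih]
    norm_cast; ring

theorem finite_of_le (e : ℕ) (he : e = 0 ∨ e = 1) (c : ℂ) (g : ℕ) (hg : g % 2 ≠ e) (I : Ideal SS) 
    (h : JS e c g ≤ I) : Module.Finite ℂ (SS ⧸ I) := by
  have : Module.Finite ℂ (SS ⧸ JS e c g) := by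
    rcases he with rfl | rfl
    · obtain ⟨m, rfl⟩ : ∃ m, g = 2 * m + 1 := ⟨g / 2, by omega⟩
      exact Module.finite_of_rank_eq_nat (rank_odd c m)
    · obtain ⟨m, rfl⟩ : ∃ m, g = 2 * m := ⟨g / 2, by omega⟩
      exact Module.finite_of_rank_eq_nat (rank_even c m)
  refine Module.Finite.of_surjective (Ideal.Quotient.factorₐ ℂ h).toLinearMap ?_
  intro q
  obtain ⟨p, rfl⟩ := Ideal.Quotient.mk_surjective q
  exact ⟨Ideal.Quotient.mk _ p, rfl⟩

theorem JS_eq (e : ℕ) (c : ℂ) (n : ℕ) (h : Z e c n ∈ JS e c (n + 1)) : JS e c (n + 1) = JS e c n := by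
  have hw := wa_zero SS e c
  refine le_antisymm (JJ_anti hw (by omega)) ?_
  exact JJ_le h (zz_mem hw (by omega)) (zz_mem hw (by omega))

/-- β = -8 -/
theorem rank_minus (c : ℂ) (hc : c ≠ 0) (g : ℕ) : 
    Module.rank ℂ (SS ⧸ JS 1 c g) = ((g / 2) * (g / 2 + 1) : ℕ) := by
  have hw := wa_zero SS 1 c
  rcases Nat.even_or_odd' g with ⟨m, rfl | rfl⟩
  · rw [rank_even]; congr; all_goals omega
  · have : Module.Finite ℂ (SS ⧸ JS 1 c (2 * m + 1)) := 
      finite_of_le 1 (Or.inr rfl) c (2 * m + 2) (by omega) _ (JJ_anti hw (by omega))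
    rw [JS_eq 1 c (2 * m) (lemmaM 1 (Or.inr rfl) c hc m (2 * m) rfl _ le_rfl (Or.inl rfl)), rank_even]
    congr; all_goals omega


theorem plus_gen (c : ℂ) (k : ℕ) (s : SS) (hs : s ∈ JS 0 c (2 * k + 1)) :
    ∃ q, s - q * Z 0 c (2 * k + 1) ∈ JS 0 c (2 * k + 1 + 1) := by
  have hw := wa_zero SS 0 c
  rw [JS, JJ, Ideal.mem_span_insert] at hs
  obtain ⟨q, z, hz, rfl⟩ := hs
  refine ⟨q, ?_⟩
  rw [Z, add_sub_cancel_left]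
  rw [Ideal.mem_span_pair] at hz
  obtain ⟨a, b, rfl⟩ := hz
  exact add_mem (Ideal.mul_mem_left _ _ (zz_mem hw (by omega))) (Ideal.mul_mem_left _ _ (zz_mem hw (by omega)))

theorem plus_anti (c : ℂ) (k : ℕ) : JS 0 c (2 * k + 3) ≤ JS 0 c (2 * k + 1 + 1) :=
  JJ_anti (wa_zero SS 0 c) (by omega)

theorem plus_fin (c : ℂ) (k : ℕ) (I : Ideal SS) (hI : JS 0 c (2 * k + 1 + 1) ≤ I) :
    Module.Finite ℂ (SS ⧸ I) :=
  finite_of_le 0 (Or.inl rfl) c (2 * k + 3) (by omega) _ ((plus_anti c k).trans hI)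

theorem plus_t (c : ℂ) (k : ℕ) : Polynomial.X * Z 0 c (2 * k + 1) ∈ JS 0 c (2 * k + 1 + 1) := by
  have h2 := Z_pow_mem 0 (Or.inl rfl) c 1 (2 * k + 3) (2 * k + 1) (by omega) (by omega)
  rw [pow_one] at h2
  exact plus_anti c k h2

theorem plus_a0 (c : ℂ) (k : ℕ) : Polynomial.C Polynomial.X * Polynomial.X ^ (k + 1) ∈ JS 0 c (2 * k + 1 + 1) := by
  have h2 := Z_pow_mem 0 (Or.inl rfl) c (k + 1) (2 * k + 3) 1 (by omega) (by omega)
  rw [Z, zz_one, mul_comm (Polynomial.X ^ (k + 1))] at h2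
  exact plus_anti c k h2

theorem exists_colon {T : Type*} [CommRing T] (K : Ideal T) (a : T) :
    ∃ I : Ideal T, ∀ s, s ∈ I ↔ a * s ∈ K :=
  ⟨Submodule.comap (LinearMap.mulLeft T a) K, fun _ => Iff.rfl⟩

theorem plus_a (c : ℂ) (hc : c ≠ 0) (k : ℕ) :
    Polynomial.C Polynomial.X * Z 0 c (2 * k + 1) ∈ JS 0 c (2 * k + 1 + 1) := by
  obtain ⟨I, hmem⟩ := exists_colon (JS 0 c (2 * k + 1 + 1)) (Polynomial.C Polynomial.X)
  have hI : JS 0 c (2 * k + 1 + 1) ≤ I := fun s hs => (hmem s).2 (Ideal.mul_mem_left _ _ hs)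
  have := plus_fin c k I hI
  have h0 : Polynomial.X ^ (k + 1) ∈ I := (hmem _).2 (plus_a0 c k)
  have h1 : Z 0 c (2 * k + 1) ∈ I :=
    lemmaM 0 (Or.inl rfl) c hc (k + 1) (2 * k + 1) (by ring) I hI (Or.inr (Or.inl h0))
  exact (hmem _).1 h1

theorem plus_not_mem (c : ℂ) (hc : c ≠ 0) (k : ℕ) (hk : (k + 1) % 2 = 1) :
    Z 0 c (2 * k + 1) ∉ JS 0 c (2 * k + 1 + 1) := by
  have h := not_mem c hc (k + 1) hk
  rwa [show 2 * (k + 1) - 1 = 2 * k + 1 by omega, show 2 * (k + 1) = 2 * k + 1 + 1 by omega] at h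

theorem plus_1 (c : ℂ) (hc : c ≠ 0) (k : ℕ) (hk : (k + 1) % 2 = 1) :
    Module.rank ℂ (SS ⧸ JS 0 c (2 * k + 1 + 1)) = ((k + 1) ^ 2 + 1 : ℕ) := by
  rw [rank_step (JS 0 c (2 * k + 1 + 1)) (JS 0 c (2 * k + 1)) (Z 0 c (2 * k + 1))
        (zz_mem (wa_zero SS 0 c) le_rfl) (plus_not_mem c hc k hk) (JJ_anti (wa_zero SS 0 c) (Nat.le_succ _))
        (plus_gen c k) (plus_a c hc k) (plus_t c k), rank_odd]
  push_cast; rfl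

theorem plus_0 (c : ℂ) (hc : c ≠ 0) (k : ℕ) (hk : (k + 1) % 2 = 0) :
    Module.rank ℂ (SS ⧸ JS 0 c (2 * k + 1 + 1)) = ((k + 1) ^ 2 : ℕ) := by
  have := plus_fin c k _ le_rfl
  rw [JS_eq 0 c (2 * k + 1) (lemmaM 0 (Or.inl rfl) c hc (k + 1) (2 * k + 1) (by ring) _ le_rfl 
        (Or.inr (Or.inr (Nat.even_iff.2 hk)))), rank_odd]

/-- β = 8 -/
theorem rank_plus (c : ℂ) (hc : c ≠ 0) (g : ℕ) (hg : 1 ≤ g) : 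
    Module.rank ℂ (SS ⧸ JS 0 c g) = (((g + 1) / 2) ^ 2 + if g % 4 = 2 then 1 else 0 : ℕ) := by
  rcases Nat.even_or_odd' g with ⟨m, rfl | rfl⟩
  · obtain ⟨k, rfl⟩ : ∃ k, m = k + 1 := ⟨m - 1, by omega⟩
    have hdiv : (2 * (k + 1) + 1) / 2 = k + 1 := by omega
    rw [hdiv, show 2 * (k + 1) = 2 * k + 1 + 1 by ring]
    by_cases hk : (k + 1) % 2 = 0
    · rw [plus_0 c hc k hk, if_neg (by omega), add_zero]
    · rw [plus_1 c hc k (by omega), if_pos (by omega)]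
  · rw [rank_odd, if_neg (by omega), add_zero, show (2 * m + 1 + 1) / 2 = m + 1 by omega]

/-- coefficients of the three-variable recursion -/
noncomputable def wz (k : ℕ) : MvPolynomial (Fin 3) ℂ :=
  C ((k : ℂ) ^ 2) * (X 1 + C ((-1) ^ k * 8))

theorem wz_zero : wz 0 = 0 := by simp [wz]

theorem zeta_eq (k : ℕ) : zeta k = zz wz (X 0) (X 2) k := by
  induction k using Nat.strong_induction_on with
  | _ k ih =>
    match k with
    | 0 => rw [zeta, zz]
    | 1 => rw [zeta, zz]
    | 2 =>
      rw [zeta, zz, ih 1 (by omega), ih 0 (by omega)]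
      simp [wz, sub_eq_add_neg]
    | n + 3 =>
      rw [zeta, zz, ih n (by omega), ih (n + 1) (by omega), ih (n + 2) (by omega)]
      have h2 : (C 2 : MvPolynomial (Fin 3) ℂ) = 2 := map_ofNat C 2
      simp [wz, h2]

theorem J_eq (g : ℕ) : J g = JJ wz (X 0) (X 2) g := by
  rw [J, JJ, zeta_eq, zeta_eq, zeta_eq]

theorem gamma_pow_mem (g : ℕ) : (X 2 : MvPolynomial (Fin 3) ℂ) ^ g ∈ J g := by
  rw [J_eq]
  induction g with
  | zero => rw [JJ_zero]; trivial
  | succ g ih =>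
    rw [pow_succ']
    exact t_mul_mem wz_zero ih

theorem wz_mul (k : ℕ) : (X 1 - C ((-1) ^ k * 8)) * wz k =
    ((k ^ 2 : ℕ) : MvPolynomial (Fin 3) ℂ) * ((X 1) ^ 2 - 64) := by
  have h : (C ((-1) ^ k * 8) : MvPolynomial (Fin 3) ℂ) ^ 2 = 64 := by
    rw [← map_pow, mul_pow, ← pow_mul, mul_comm k 2, pow_mul]
    norm_num
    exact map_ofNat C 64
  have h2 : (C ((k : ℂ) ^ 2) : MvPolynomial (Fin 3) ℂ) = ((k ^ 2 : ℕ) : MvPolynomial (Fin 3) ℂ) := by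
    push_cast; simp
  rw [wz, h2]
  linear_combination (-((k ^ 2 : ℕ) : MvPolynomial (Fin 3) ℂ)) * h

theorem beta_aux (g : ℕ) (I : Ideal (MvPolynomial (Fin 3) ℂ)) (hJ : J g ≤ I) (ht : X 2 ∈ I) (j k : ℕ)
    (h : g ≤ k + j) : ((X 1) ^ 2 - 64) ^ j * zz wz (X 0) (X 2) k ∈ I := by
  induction j generalizing k with
  | zero =>
    rw [pow_zero, one_mul]
    apply hJ
    rw [J_eq]
    exact zz_mem wz_zero h
  | succ j ih =>
    have h1 := ih (k + 1) (by omega)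
    have h2 := ih (k + 1 + 1) (by omega)
    have e := zz_succ wz (X 0) (X 2) wz_zero (k + 1)
    have e2 := wz_mul (k + 1)
    rw [show k + 1 - 1 = k by omega] at e
    apply natmul_mem (n := (k + 1) ^ 2) (by positivity)
    push_cast at e e2 ⊢
    have : ((k : MvPolynomial (Fin 3) ℂ) + 1) ^ 2 * (((X 1) ^ 2 - 64) ^ (j + 1) * zz wz (X 0) (X 2) k) =
      (X 1 - C ((-1) ^ (k + 1) * 8)) * (((X 1) ^ 2 - 64) ^ j * zz wz (X 0) (X 2) (k + 1 + 1)) 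
      - (X 1 - C ((-1) ^ (k + 1) * 8)) * X 0 * (((X 1) ^ 2 - 64) ^ j * zz wz (X 0) (X 2) (k + 1)) 
      - ((X 1 - C ((-1) ^ (k + 1) * 8)) * ((X 1) ^ 2 - 64) ^ j * (2 * ((k : MvPolynomial (Fin 3) ℂ) + 1) * 
        (((k : MvPolynomial (Fin 3) ℂ) + 1) - 1) * zz wz (X 0) (X 2) (k - 1))) * X 2 := by
      rw [e, pow_succ]
      linear_combination (- ((X 1) ^ 2 - 64) ^ j * zz wz (X 0) (X 2) k) * e2
    rw [this]
    exact sub_mem (sub_mem (I.mul_mem_left _ h2) (I.mul_mem_left _ h1)) (I.mul_mem_left _ ht)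

theorem beta_pow_mem (g : ℕ) : ((X 1 : MvPolynomial (Fin 3) ℂ) ^ 2 - 64) ^ (g * g) ∈ J g := by
  have h := beta_aux g (J g ⊔ Ideal.span {X 2}) le_sup_left
    (Ideal.mem_sup_right (Ideal.mem_span_singleton_self _)) g 0 (by omega)
  rw [zz_zero, mul_one] at h
  obtain ⟨u, hu, v, hv, h⟩ := Submodule.mem_sup.1 h
  obtain ⟨r, rfl⟩ := Ideal.mem_span_singleton'.1 hv
  rw [pow_mul, ← h, ← Ideal.Quotient.eq_zero_iff_mem, map_pow, map_add,
    Ideal.Quotient.eq_zero_iff_mem.2 hu, zero_add, ← map_pow, Ideal.Quotient.eq_zero_iff_mem, mul_pow]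
  exact Ideal.mul_mem_left _ _ (gamma_pow_mem g)

theorem zz_monic {T : Type*} [CommRing T] [Nontrivial T] (u : ℕ → T) (hu : u 0 = 0) (t : T) (k : ℕ) :
    (zz (fun k => Polynomial.C (u k)) Polynomial.X (Polynomial.C t) k).Monic ∧
    (zz (fun k => Polynomial.C (u k)) Polynomial.X (Polynomial.C t) k).natDegree = k := by
  have hw : (fun k => Polynomial.C (u k)) 0 = 0 := by simp [hu]
  induction k using Nat.strong_induction_on with
  | _ k ih =>
    match k with
    | 0 => simp [zz_zero]
    | 1 => simp [zz_one, Polynomial.monic_X]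
    | k + 2 =>
      rw [zz_succ _ _ _ hw]
      obtain ⟨m1, d1⟩ := ih (k + 1) (by omega)
      obtain ⟨m2, d2⟩ := ih k (by omega)
      obtain ⟨m3, d3⟩ := ih (k - 1) (by omega)
      rw [show k + 1 - 1 = k by omega, show k + 1 - 2 = k - 1 by omega]
      set P := zz (fun k => Polynomial.C (u k)) Polynomial.X (Polynomial.C t) (k + 1)
      set Q := zz (fun k => Polynomial.C (u k)) Polynomial.X (Polynomial.C t) k
      set R := zz (fun k => Polynomial.C (u k)) Polynomial.X (Polynomial.C t) (k - 1)
      have hm : (Polynomial.X * P).Monic := Polynomial.monic_X.mul m1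
      have hd : (Polynomial.X * P).natDegree = k + 2 := by
        rw [Polynomial.natDegree_X_mul m1.ne_zero, d1]
      have hb : (Polynomial.C (u (k + 1)) * Q + 2 * ((k + 1 : ℕ) : Polynomial T) *
          (((k + 1 : ℕ) : Polynomial T) - 1) * Polynomial.C t * R).natDegree ≤ k := by
        have e : 2 * ((k + 1 : ℕ) : Polynomial T) *
          (((k + 1 : ℕ) : Polynomial T) - 1) * Polynomial.C t = Polynomial.C (2 * ((k + 1 : ℕ) : T) *
          (((k + 1 : ℕ) : T) - 1) * t) := by
          have h2 : (Polynomial.C 2 : Polynomial T) = 2 := map_ofNat Polynomial.C 2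
          simp [h2]
        rw [e]
        refine Polynomial.natDegree_add_le_of_degree_le ?_ ?_
        · exact (Polynomial.natDegree_C_mul_le _ _).trans d2.le
        · exact (Polynomial.natDegree_C_mul_le _ _).trans (by omega)
      rw [add_assoc]
      have hlt : (Polynomial.C (u (k + 1)) * Q + 2 * ((k + 1 : ℕ) : Polynomial T) *
          (((k + 1 : ℕ) : Polynomial T) - 1) * Polynomial.C t * R).degree < (Polynomial.X * P).degree := by
        apply Polynomial.degree_lt_degree
        omega
      refine ⟨hm.add_of_left hlt, ?_⟩
      rw [Polynomial.natDegree_add_eq_left_of_degree_lt hlt, hd]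

theorem nil_integral {A : Type*} [CommRing A] [Algebra ℂ A] (x : A) (n : ℕ) (h : x ^ n = 0) :
    IsIntegral ℂ x := by
  apply IsIntegral.of_pow (n := n + 1) (by omega)
  rw [pow_succ, h, zero_mul]
  exact isIntegral_zero

theorem fin_A (g : ℕ) : Module.Finite ℂ (MvPolynomial (Fin 3) ℂ ⧸ J g) := by
  rcases subsingleton_or_nontrivial (MvPolynomial (Fin 3) ℂ ⧸ J g) with hs | hn
  · infer_instance
  let A := MvPolynomial (Fin 3) ℂ ⧸ J g
  let π : MvPolynomial (Fin 3) ℂ →ₐ[ℂ] A := Ideal.Quotient.mkₐ ℂ (J g)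
  have hπ : ∀ f, f ∈ J g → π f = 0 := fun f hf => Ideal.Quotient.eq_zero_iff_mem.2 hf
  have ht : IsIntegral ℂ (π (X 2)) := by
    have h := hπ _ (gamma_pow_mem g)
    rw [map_pow] at h
    exact nil_integral _ _ h
  have hb0 : IsIntegral ℂ (π ((X 1) ^ 2 - 64)) := by
    have h := hπ _ (beta_pow_mem g)
    rw [map_pow] at h
    exact nil_integral _ _ h
  have hb : IsIntegral ℂ (π (X 1)) := by
    apply IsIntegral.of_pow (n := 2) (by norm_num)
    have e : π (X 1) ^ 2 = π ((X 1) ^ 2 - 64) + algebraMap ℂ A 64 := by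
      rw [map_ofNat (algebraMap ℂ A) 64, map_sub, map_pow, map_ofNat π 64]; ring
    rw [e]
    exact hb0.add isIntegral_algebraMap
  let S := integralClosure ℂ A
  let t' : S := ⟨π (X 2), ht⟩
  let b' : S := ⟨π (X 1), hb⟩
  let u : ℕ → S := fun k => algebraMap ℂ S ((k : ℂ) ^ 2) * (b' + algebraMap ℂ S ((-1) ^ k * 8))
  have hu : u 0 = 0 := by simp [u]
  have hw : (fun k => Polynomial.C (u k)) 0 = 0 := by simp [hu]
  have : Nontrivial S := inferInstance
  have ha0 : IsIntegral S (π (X 0)) := by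
    refine ⟨_, (zz_monic u hu t' g).1, ?_⟩
    have h1 := map_zz (Polynomial.eval₂RingHom (algebraMap S A) (π (X 0))) (fun k => Polynomial.C (u k)) Polynomial.X (Polynomial.C t') hw g
    simp only [Polynomial.coe_eval₂RingHom, Polynomial.eval₂_X, Polynomial.eval₂_C] at h1
    rw [h1]
    have h2 := map_zz π.toRingHom wz (X 0) (X 2) wz_zero g
    have h3 : π.toRingHom (zz wz (X 0) (X 2) g) = 0 := by
      apply hπ
      rw [J_eq]
      exact zz_mem wz_zero le_rfl
    rw [h3] at h2
    rw [h2]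
    congr 1
  have ha : IsIntegral ℂ (π (X 0)) := isIntegral_trans _ ha0
  have hint : Algebra.IsIntegral ℂ A := by
    rw [← integralClosure_eq_top_iff, eq_top_iff]
    have hr : (⊤ : Subalgebra ℂ A) = (⊤ : Subalgebra ℂ (MvPolynomial (Fin 3) ℂ)).map π := by
      rw [Algebra.map_top]
      exact ((AlgHom.range_eq_top _).2 (Ideal.Quotient.mkₐ_surjective _ _)).symm
    rw [hr, ← MvPolynomial.adjoin_range_X, AlgHom.map_adjoin, Algebra.adjoin_le_iff]
    rintro _ ⟨_, ⟨i, rfl⟩, rfl⟩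
    fin_cases i
    · exact ha
    · exact hb
    · exact ht
  exact Algebra.IsIntegral.finite

theorem finrank_ker_mul {A B : Type*} [CommRing A] [Algebra ℂ A] [Module.Finite ℂ A] [CommRing B] [Algebra ℂ B]
    (π : A →ₐ[ℂ] B) (hπ : Function.Surjective π) (x : A) (h : ∀ y, π y = 0 → x ∣ y) (hx : π x = 0) :
    Module.finrank ℂ (LinearMap.ker (LinearMap.mulLeft ℂ x)) = Module.finrank ℂ B := by
  have h1 := LinearMap.finrank_range_add_finrank_ker (LinearMap.mulLeft ℂ x)
  have h2 := LinearMap.finrank_range_add_finrank_ker π.toLinearMap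
  have h3 : LinearMap.range (LinearMap.mulLeft ℂ x) = LinearMap.ker π.toLinearMap := by
    ext y
    rw [LinearMap.mem_range, LinearMap.mem_ker]
    constructor
    · rintro ⟨z, rfl⟩
      simp [hx]
    · intro hy
      obtain ⟨z, rfl⟩ := h y hy
      exact ⟨z, rfl⟩
  rw [LinearMap.range_eq_top.2 hπ, finrank_top] at h2
  rw [h3] at h1
  omega

theorem finrank_ker_prod {A : Type*} [CommRing A] [Algebra ℂ A] [Module.Finite ℂ A] (x y : A)
    (h : x - y = 16) :
    Module.finrank ℂ (LinearMap.ker (LinearMap.mulLeft ℂ (x * y))) = 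
    Module.finrank ℂ (LinearMap.ker (LinearMap.mulLeft ℂ x)) + 
    Module.finrank ℂ (LinearMap.ker (LinearMap.mulLeft ℂ y)) := by
  have hu : algebraMap ℂ A (1 / 16) * 16 = 1 := by
    rw [← map_ofNat (algebraMap ℂ A) 16, ← map_mul]; norm_num
  set q := algebraMap ℂ A (1 / 16)
  rw [← Submodule.finrank_sup_add_finrank_inf_eq]
  have hinf : LinearMap.ker (LinearMap.mulLeft ℂ x) ⊓ LinearMap.ker (LinearMap.mulLeft ℂ y) = ⊥ := by
    rw [eq_bot_iff]
    rintro z ⟨hx, hy⟩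
    have hx : x * z = 0 := hx
    have hy : y * z = 0 := hy
    show z = 0
    linear_combination q * hx - q * hy - q * z * h - z * hu
  have hsup : LinearMap.ker (LinearMap.mulLeft ℂ x) ⊔ LinearMap.ker (LinearMap.mulLeft ℂ y) = 
      LinearMap.ker (LinearMap.mulLeft ℂ (x * y)) := by
    apply le_antisymm
    · refine sup_le ?_ ?_
      · intro z hz
        have hz : x * z = 0 := hz
        show x * y * z = 0
        linear_combination y * hz
      · intro z hz
        have hz : y * z = 0 := hz
        show x * y * z = 0
        linear_combination x * hz
    · intro z hz
      have hz : x * y * z = 0 := hz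
      refine Submodule.mem_sup.2 ⟨- q * y * z, ?_, q * x * z, ?_, ?_⟩
      · show x * (- q * y * z) = 0
        linear_combination - q * hz
      · show y * (q * x * z) = 0
        linear_combination q * hz
      · linear_combination q * z * h + z * hu
  rw [hinf, hsup, finrank_bot, add_zero]

/-- specialisation β = b -/
noncomputable def spec (b : ℂ) : MvPolynomial (Fin 3) ℂ →ₐ[ℂ] SS :=
  aeval ![Polynomial.C Polynomial.X, algebraMap ℂ SS b, Polynomial.X]

/-- the section of spec -/
noncomputable def sect : SS →+* MvPolynomial (Fin 3) ℂ :=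
  Polynomial.eval₂RingHom (Polynomial.eval₂RingHom (C : ℂ →+* MvPolynomial (Fin 3) ℂ) (X 0)) (X 2)

theorem spec0 (b : ℂ) : spec b (X 0) = Polynomial.C Polynomial.X := by simp [spec]
theorem spec1 (b : ℂ) : spec b (X 1) = algebraMap ℂ SS b := by simp [spec]
theorem spec2 (b : ℂ) : spec b (X 2) = Polynomial.X := by simp [spec]
theorem sect_C (b : ℂ) : sect (algebraMap ℂ SS b) = C b := by
  simp [sect, Polynomial.algebraMap_apply]
theorem sect_a : sect (Polynomial.C Polynomial.X) = X 0 := by simp [sect]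
theorem sect_t : sect Polynomial.X = X 2 := by simp [sect]

theorem spec_sect (b : ℂ) (f : SS) : spec b (sect f) = f := by
  have : (spec b).toRingHom.comp sect = RingHom.id SS := by
    apply Polynomial.ringHom_ext'
    · apply Polynomial.ringHom_ext'
      · refine RingHom.ext fun x => ?_
        show spec b (sect (algebraMap ℂ SS x)) = algebraMap ℂ SS x
        rw [sect_C]
        exact (spec b).commutes x
      · show spec b (sect (Polynomial.C Polynomial.X)) = _
        rw [sect_a, spec0]; rfl
    · show spec b (sect Polynomial.X) = _
      rw [sect_t, spec2]; rfl
  exact DFunLike.congr_fun this f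

theorem spec_ker (b : ℂ) (f : MvPolynomial (Fin 3) ℂ) : (X 1 - C b) ∣ f - sect (spec b f) := by
  rw [← Ideal.mem_span_singleton, ← Ideal.Quotient.eq]
  have : (Ideal.Quotient.mk (Ideal.span {X 1 - C b})) = 
    ((Ideal.Quotient.mk (Ideal.span {X 1 - C b})).comp sect).comp (spec b).toRingHom := by
    apply MvPolynomial.ringHom_ext
    · intro r
      show Ideal.Quotient.mk _ (C r) = Ideal.Quotient.mk _ (sect (spec b (C r)))
      rw [show spec b (C r) = algebraMap ℂ SS r from (spec b).commutes r, sect_C]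
    · intro i
      show Ideal.Quotient.mk _ (X i) = Ideal.Quotient.mk _ (sect (spec b (X i)))
      fin_cases i
      · show Ideal.Quotient.mk _ (X 0) = Ideal.Quotient.mk _ (sect (spec b (X 0)))
        rw [spec0, sect_a]
      · show Ideal.Quotient.mk _ (X 1) = Ideal.Quotient.mk _ (sect (spec b (X 1)))
        rw [spec1, sect_C, Ideal.Quotient.eq]
        exact Ideal.mem_span_singleton_self _
      · show Ideal.Quotient.mk _ (X 2) = Ideal.Quotient.mk _ (sect (spec b (X 2)))
        rw [spec2, sect_t]
  exact DFunLike.congr_fun this f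

theorem spec_wz (b c : ℂ) (e : ℕ) (h : ∀ k : ℕ, (k : ℂ) ^ 2 * (b + (-1) ^ k * 8) = ww e c k) (k : ℕ) :
    spec b (wz k) = wa SS e c k := by
  rw [wa, ← h, wz, map_mul, map_add, spec1]
  rw [show ∀ r, spec b (C r) = algebraMap ℂ SS r from (spec b).commutes]
  rw [show ∀ r, spec b (C r) = algebraMap ℂ SS r from (spec b).commutes]
  rw [← map_add, ← map_mul]

theorem spec_zz (b c : ℂ) (e : ℕ) (h : ∀ k : ℕ, (k : ℂ) ^ 2 * (b + (-1) ^ k * 8) = ww e c k) (k : ℕ) :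
    spec b (zz wz (X 0) (X 2) k) = Z e c k := by
  have h1 := map_zz (spec b).toRingHom wz (X 0) (X 2) wz_zero k
  have h2 : (fun k => (spec b).toRingHom (wz k)) = wa SS e c := funext (spec_wz b c e h)
  have h3 : (spec b).toRingHom (X 0) = Polynomial.C Polynomial.X := spec0 b
  have h4 : (spec b).toRingHom (X 2) = Polynomial.X := spec2 b
  rw [h2, h3, h4] at h1
  exact h1

theorem spec_J (b c : ℂ) (e : ℕ) (h : ∀ k : ℕ, (k : ℂ) ^ 2 * (b + (-1) ^ k * 8) = ww e c k) (g : ℕ) :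
    (J g).map (spec b) = JS e c g := by
  rw [J_eq, JJ, Ideal.map_span, JS, JJ]
  simp only [Set.image_insert_eq, Set.image_singleton, spec_zz b c e h]
  rfl

theorem finrank_spec (b c : ℂ) (e : ℕ) (h : ∀ k : ℕ, (k : ℂ) ^ 2 * (b + (-1) ^ k * 8) = ww e c k) (g : ℕ) :
    Module.finrank ℂ (LinearMap.ker (LinearMap.mulLeft ℂ (Ideal.Quotient.mk (J g) (X 1 - C b)))) = 
    Module.finrank ℂ (SS ⧸ JS e c g) := by
  have := fin_A g
  have hle : ∀ f ∈ J g, spec b f ∈ JS e c g := fun f hf => by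
    rw [← spec_J b c e h]; exact Ideal.mem_map_of_mem _ hf
  have hsurj : Function.Surjective (spec b) := fun f => ⟨sect f, spec_sect b f⟩
  let π : (MvPolynomial (Fin 3) ℂ ⧸ J g) →ₐ[ℂ] SS ⧸ JS e c g :=
    Ideal.Quotient.liftₐ (J g) ((Ideal.Quotient.mkₐ ℂ (JS e c g)).comp (spec b))
      (fun f hf => Ideal.Quotient.eq_zero_iff_mem.2 (hle f hf))
  have hπ : ∀ f, π (Ideal.Quotient.mk (J g) f) = Ideal.Quotient.mk (JS e c g) (spec b f) := fun f => rfl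
  refine finrank_ker_mul (A := MvPolynomial (Fin 3) ℂ ⧸ J g) (B := SS ⧸ JS e c g) π ?_ _ ?_ ?_
  · intro q
    obtain ⟨f, rfl⟩ := Ideal.Quotient.mk_surjective q
    exact ⟨Ideal.Quotient.mk _ (sect f), by rw [hπ, spec_sect]⟩
  · intro y hy
    obtain ⟨f, rfl⟩ := Ideal.Quotient.mk_surjective y
    rw [hπ, Ideal.Quotient.eq_zero_iff_mem, ← spec_J b c e h, 
      Ideal.mem_map_iff_of_surjective _ hsurj] at hy
    obtain ⟨f', hf', hff⟩ := hy
    obtain ⟨r, hr⟩ := spec_ker b (f - f')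
    rw [map_sub, hff, sub_self, map_zero, sub_zero] at hr
    refine ⟨Ideal.Quotient.mk _ r, ?_⟩
    rw [← map_mul, ← hr, Ideal.Quotient.eq]
    simpa using hf'
  · rw [hπ, map_sub, spec1, show spec b (C b) = algebraMap ℂ SS b from (spec b).commutes b, sub_self, map_zero]

theorem spec_hyp8 (k : ℕ) : (k : ℂ) ^ 2 * (8 + (-1) ^ k * 8) = ww 0 16 k := by
  rw [ww]
  rcases Nat.even_or_odd k with hk | hk
  · rw [if_pos (Nat.even_iff.1 hk), hk.neg_one_pow]; ring
  · rw [if_neg (by have := Nat.odd_iff.1 hk; omega), hk.neg_one_pow]; ring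

theorem spec_hypm8 (k : ℕ) : (k : ℂ) ^ 2 * (-8 + (-1) ^ k * 8) = ww 1 (-16) k := by
  rw [ww]
  rcases Nat.even_or_odd k with hk | hk
  · rw [if_neg (by have := Nat.even_iff.1 hk; omega), hk.neg_one_pow]; ring
  · rw [if_pos (Nat.odd_iff.1 hk), hk.neg_one_pow]; ring

theorem final_arith (g d : ℕ) :
    (g / 2) * (g / 2 + 1) + (((g + 1) / 2) ^ 2 + d) = g * (g + 1) / 2 + d := by
  rcases Nat.even_or_odd' g with ⟨m, rfl | rfl⟩
  · rw [show 2 * m / 2 = m by omega, show (2 * m + 1) / 2 = m by omega,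
      show 2 * m * (2 * m + 1) / 2 = m * (2 * m + 1) by rw [mul_assoc]; omega]
    ring
  · rw [show (2 * m + 1) / 2 = m by omega, show (2 * m + 1 + 1) / 2 = m + 1 by omega,
      show (2 * m + 1) * (2 * m + 1 + 1) / 2 = (2 * m + 1) * (m + 1) by
        rw [show (2 * m + 1) * (2 * m + 1 + 1) = 2 * ((2 * m + 1) * (m + 1)) by ring]; omega]
    ring

/-- For g ≥ 1, the kernel of multiplication by β² − 64 on ℂ[α,β,γ]/J_g has dimension
    g(g+1)/2 + δ, where δ = 1 if g ≡ 2 (mod 4) and δ = 0 otherwise. -/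
theorem dim_ker_mul_betaSq_sub (g : ℕ) (hg : 1 ≤ g) :
    Module.finrank ℂ
        (LinearMap.ker (LinearMap.mulLeft ℂ
          (Ideal.Quotient.mk (J g) ((X 1 : MvPolynomial (Fin 3) ℂ) ^ 2 - 64))))
      = g * (g + 1) / 2 + (if g % 4 = 2 then 1 else 0) := by
  have := fin_A g
  have e8 : (C 8 : MvPolynomial (Fin 3) ℂ) = 8 := map_ofNat C 8
  have em8 : (C (-8) : MvPolynomial (Fin 3) ℂ) = -8 := by rw [map_neg, e8]
  have e : Ideal.Quotient.mk (J g) ((X 1 : MvPolynomial (Fin 3) ℂ) ^ 2 - 64) = 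
      Ideal.Quotient.mk (J g) (X 1 - C (-8)) * Ideal.Quotient.mk (J g) (X 1 - C 8) := by
    rw [← map_mul, e8, em8]
    congr 1
    ring
  have h16 : Ideal.Quotient.mk (J g) (X 1 - C (-8)) - Ideal.Quotient.mk (J g) (X 1 - C 8) = 16 := by
    rw [← map_sub, e8, em8, ← map_ofNat (Ideal.Quotient.mk (J g)) 16]
    congr 1
    ring
  rw [e, finrank_ker_prod _ _ h16, finrank_spec _ _ _ spec_hyp8, finrank_spec _ _ _ spec_hypm8]
  have h1 := rank_plus 16 (by norm_num) g hg
  have h2 := rank_minus (-16) (by norm_num) g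
  rw [Module.finrank, Module.finrank, h1, h2, Cardinal.toNat_natCast, Cardinal.toNat_natCast]
  exact final_arith g _
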